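/- Fix constants R*, ε, η > 0. There exists n₀ such that for every n ≥ n₀ there exist a finite codebook C ⊂ ℝⁿ with log₂|C| ≤ n(R* + ε) and an encoder f : ℝⁿ × 𝕊₊ⁿ → C such that for every positive semidefinite Σ ∈ ℝ^{n×n} with tr(Σ) = n, writing Ŵ(Σ) = f(W, Σ) ∈ C for W ~ N(0, Iₙ), one has (1/n) E_W[d_Σ(W, Ŵ(Σ))] ≤ 𝐃_rc(spec(Σ), R*) + η · (tr Σ)/n. -/

import Mathlib

open MeasureTheory Matrix Real

/-- Standard Gaussian measure `N(0, I_n)` on `ℝⁿ`. -/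
noncomputable def stdGaussian (n : ℕ) : Measure (Fin n → ℝ) :=
  Measure.pi fun _ => ProbabilityTheory.gaussianReal 0 1

/-- Distortion `d_Σ(w, v) = (w - v)ᵀ Σ (w - v)`. -/
noncomputable def dSig {n : ℕ} (Sig : Matrix (Fin n) (Fin n) ℝ) (w v : Fin n → ℝ) : ℝ :=
  (w - v) ⬝ᵥ Sig.mulVec (w - v)

/-- Random-coding distortion `D_rc(λ, T) = (1/n) Σᵢ λᵢ/(1 + λᵢ T)`. -/
noncomputable def Drc {n : ℕ} (lam : Fin n → ℝ) (T : ℝ) : ℝ :=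
  (1 / (n : ℝ)) * ∑ i, lam i / (1 + lam i * T)

/-- Random-coding rate `R_rc(λ, T) = (1/(2n)) Σᵢ log₂(1 + λᵢ T)`. -/
noncomputable def Rrc {n : ℕ} (lam : Fin n → ℝ) (T : ℝ) : ℝ :=
  (1 / (2 * (n : ℝ))) * ∑ i, Real.logb 2 (1 + lam i * T)

/-- `T_rc(λ, R)`: the unique `T > 0` with `R_rc(λ, T) = R`. -/
noncomputable def Trc {n : ℕ} (lam : Fin n → ℝ) (R : ℝ) : ℝ :=
  Classical.epsilon fun T => 0 < T ∧ Rrc lam T = R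

/-- `𝐃_rc(λ, R) = D_rc(λ, T_rc(λ, R))`. -/
noncomputable def DDrc {n : ℕ} (lam : Fin n → ℝ) (R : ℝ) : ℝ :=
  Drc lam (Trc lam R)

namespace UCB

open ProbabilityTheory

instance (n : ℕ) : IsProbabilityMeasure (_root_.stdGaussian n) := by
  unfold _root_.stdGaussian; infer_instance

lemma gauss1 (κ w r : ℝ) (h : 0 < 1 + 2 * κ * r ^ 2) :
    ∫ x, exp (-(κ * (w - r * x) ^ 2)) ∂(gaussianReal 0 1)
      = exp (-(1 / 2) * log (1 + 2 * κ * r ^ 2) - κ * w ^ 2 / (1 + 2 * κ * r ^ 2)) := by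
  set a := 1 + 2 * κ * r ^ 2 with ha
  rw [integral_gaussianReal_eq_integral_smul (by norm_num)]
  have h1 : ∀ x : ℝ, gaussianPDFReal 0 1 x • exp (-(κ * (w - r * x) ^ 2))
      = ((√(2 * π))⁻¹ * exp (- κ * w ^ 2 / a)) *
        exp (-(a / 2) * (x - 2 * κ * r * w / a) ^ 2) := by
    intro x
    simp only [gaussianPDFReal, smul_eq_mul, NNReal.coe_one, mul_one, sub_zero]
    rw [mul_assoc, mul_assoc, ← exp_add, ← exp_add]
    congr 2
    field_simp
    rw [ha]; ring
  simp_rw [h1]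
  rw [integral_const_mul, integral_sub_right_eq_self (fun x => exp (-(a / 2) * x ^ 2)),
    integral_gaussian]
  have h2 : exp (-(1 / 2) * log a - κ * w ^ 2 / a) = (√a)⁻¹ * exp (- κ * w ^ 2 / a) := by
    rw [sub_eq_add_neg, exp_add, sqrt_eq_rpow, ← rpow_neg h.le, rpow_def_of_pos h]
    congr 2 <;> ring
  rw [h2]
  have h3 : √(π / (a / 2)) = √(2 * π) * (√a)⁻¹ := by
    rw [← sqrt_inv, ← sqrt_mul (by positivity)]; congr 1; field_simp
  rw [h3]
  have : √(2 * π) ≠ 0 := by positivity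
  field_simp

lemma gaussN {n : ℕ} (κ r : ℝ) (lam w : Fin n → ℝ) (h : ∀ i, 0 < 1 + 2 * (κ * lam i) * r ^ 2) :
    ∫ x, exp (-(κ * ∑ i, lam i * (w i - r * x i) ^ 2)) ∂(_root_.stdGaussian n)
      = exp (∑ i, (-(1 / 2) * log (1 + 2 * (κ * lam i) * r ^ 2)
          - (κ * lam i) * w i ^ 2 / (1 + 2 * (κ * lam i) * r ^ 2))) := by
  unfold _root_.stdGaussian
  rw [exp_sum]
  simp_rw [← gauss1 _ _ _ (h _)]
  rw [← integral_fintype_prod_eq_prod (μ := fun _ : Fin n => gaussianReal 0 1)]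
  congr 1; ext x
  rw [← exp_sum]
  congr 1
  rw [Finset.mul_sum, ← Finset.sum_neg_distrib]
  refine Finset.sum_congr rfl fun i _ => by ring

lemma gaussN_int {n : ℕ} (κ r : ℝ) (lam w : Fin n → ℝ)
    (h : ∀ i, 0 < 1 + 2 * (κ * lam i) * r ^ 2) :
    Integrable (fun x => exp (-(κ * ∑ i, lam i * (w i - r * x i) ^ 2))) (_root_.stdGaussian n) := by
  apply Integrable.of_integral_ne_zero
  rw [gaussN κ r lam w h]
  positivity

lemma rot {n : ℕ} (U : Matrix (Fin n) (Fin n) ℝ) (hU : U * Uᵀ = 1) :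
    MeasurePreserving (fun w => Uᵀ *ᵥ w) (_root_.stdGaussian n) (_root_.stdGaussian n) := by
  have hm : Measurable (fun w : Fin n → ℝ => Uᵀ *ᵥ w) :=
    (Continuous.matrix_mulVec continuous_const continuous_id).measurable
  refine ⟨hm, ?_⟩
  have hE : (_root_.stdGaussian n).map (WithLp.toLp 2)
      = ProbabilityTheory.stdGaussian (EuclideanSpace ℝ (Fin n)) := map_pi_eq_stdGaussian
  have hu : Uᵀ ∈ Matrix.unitaryGroup (Fin n) ℝ := by
    rw [Matrix.mem_unitaryGroup_iff']
    simpa [Matrix.star_eq_conjTranspose] using hU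
  let e := Matrix.UnitaryGroup.toLinearEquiv ⟨Uᵀ, hu⟩
  let L : EuclideanSpace ℝ (Fin n) ≃ₗᵢ[ℝ] EuclideanSpace ℝ (Fin n) :=
    { toLinearEquiv := (WithLp.linearEquiv 2 ℝ (Fin n → ℝ)).trans
        (e.trans (WithLp.linearEquiv 2 ℝ (Fin n → ℝ)).symm)
      norm_map' := by
        intro x
        have h0 : ‖(WithLp.toLp 2 (Uᵀ *ᵥ x.ofLp) : EuclideanSpace ℝ (Fin n))‖ ^ 2 = ‖x‖ ^ 2 := by
          rw [EuclideanSpace.real_norm_sq_eq, EuclideanSpace.real_norm_sq_eq]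
          have : (Uᵀ *ᵥ x.ofLp) ⬝ᵥ (Uᵀ *ᵥ x.ofLp) = x.ofLp ⬝ᵥ x.ofLp := by
            rw [Matrix.dotProduct_mulVec, Matrix.vecMul_mulVec, Matrix.transpose_transpose,
              ← Matrix.dotProduct_mulVec]
            simp [hU]
          simpa [dotProduct, pow_two] using this
        have := (sq_eq_sq₀ (norm_nonneg _) (norm_nonneg _)).1 h0
        exact this }
  have h1 := stdGaussian_map L
  rw [← hE, Measure.map_map L.continuous.measurable (by fun_prop)] at h1
  have h2 := congrArg (fun m => m.map (WithLp.ofLp : EuclideanSpace ℝ (Fin n) → Fin n → ℝ)) h1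
  simp only at h2
  rw [Measure.map_map (by fun_prop) (by exact L.continuous.measurable.comp (by fun_prop)),
    Measure.map_map (by fun_prop) (by fun_prop)] at h2
  have h3 : ((WithLp.ofLp : EuclideanSpace ℝ (Fin n) → Fin n → ℝ) ∘ (WithLp.toLp 2)) = id := rfl
  rw [h3, Measure.map_id] at h2
  exact h2


open scoped ENNReal in
lemma codebook {E : Type*} [MeasurableSpace E] (Q : Measure E) [IsProbabilityMeasure Q]
    {ι : Type*} [Fintype ι] (M : ℕ) (G : ι → Set (E × E)) (hG : ∀ k, MeasurableSet (G k))
    (Typ : ι → Set E) (hT : ∀ k, MeasurableSet (Typ k)) (p : ℝ) (hp : 0 ≤ p)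
    (hgood : ∀ k, ∀ w ∈ Typ k, p ≤ Q.real {x | (w, x) ∈ G k})
    (l : E → ℝ≥0∞) (hl : Measurable l) (p0 B : ℝ≥0∞) (hp0 : p0 ≠ 0) (hp0' : p0 ≠ ∞)
    (hB : B ≠ 0) (hB' : B ≠ ∞)
    (hsum : Fintype.card ι * ENNReal.ofReal (exp (-(p * M))) * p0⁻¹
      + M * (∫⁻ x, l x ∂Q) * B⁻¹ < 1) :
    ∃ x : Fin M → E, (∀ k, Q {w | w ∈ Typ k ∧ ∀ j, (w, x j) ∉ G k} ≤ p0) ∧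
      ∀ j, l (x j) ≤ B := by
  classical
  let P : Measure (Fin M → E) := Measure.pi fun _ => Q
  have hmeas : ∀ k, MeasurableSet
      {z : (Fin M → E) × E | z.2 ∈ Typ k ∧ ∀ j, (z.2, z.1 j) ∉ G k} := by
    intro k
    have h1 : MeasurableSet {z : (Fin M → E) × E | z.2 ∈ Typ k} := measurable_snd (hT k)
    have h2 : ∀ j, MeasurableSet {z : (Fin M → E) × E | (z.2, z.1 j) ∉ G k} := by
      intro j
      have : Measurable (fun z : (Fin M → E) × E => (z.2, z.1 j)) := by fun_prop
      exact (this (hG k)).compl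
    have h3 := h1.inter (MeasurableSet.iInter h2)
    convert h3 using 1
    ext z; simp
  have hbadm : ∀ k, Measurable (fun x : Fin M → E =>
      Q {w | w ∈ Typ k ∧ ∀ j, (w, x j) ∉ G k}) := fun k =>
    measurable_measure_prodMk_left (hmeas k)
  have hbad : ∀ k, ∫⁻ x, Q {w | w ∈ Typ k ∧ ∀ j, (w, x j) ∉ G k} ∂P
      ≤ ENNReal.ofReal (exp (-(p * M))) := by
    intro k
    have e1 : ∫⁻ x, Q {w | w ∈ Typ k ∧ ∀ j, (w, x j) ∉ G k} ∂P
        = ∫⁻ w, P {x | w ∈ Typ k ∧ ∀ j, (w, x j) ∉ G k} ∂Q := by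
      have a1 := Measure.prod_apply (μ := P) (ν := Q) (hmeas k)
      have a2 := Measure.prod_apply_symm (μ := P) (ν := Q) (hmeas k)
      rw [a1] at a2
      exact a2
    rw [e1]
    calc ∫⁻ w, P {x | w ∈ Typ k ∧ ∀ j, (w, x j) ∉ G k} ∂Q
        ≤ ∫⁻ _, ENNReal.ofReal (exp (-(p * M))) ∂Q := by
          refine lintegral_mono fun w => ?_
          by_cases hw : w ∈ Typ k
          · have hs : {x : Fin M → E | w ∈ Typ k ∧ ∀ j, (w, x j) ∉ G k}
                = Set.univ.pi (fun _ => {x | (w, x) ∈ G k}ᶜ) := by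
              ext x; simp [hw]
            have hm : MeasurableSet {x | (w, x) ∈ G k} := measurable_prodMk_left (hG k)
            rw [hs, Measure.pi_pi, Finset.prod_const, Finset.card_univ, Fintype.card_fin]
            have h1 : Q {x | (w, x) ∈ G k}ᶜ ≤ ENNReal.ofReal (exp (-p)) := by
              rw [← ofReal_measureReal]
              apply ENNReal.ofReal_le_ofReal
              rw [probReal_compl_eq_one_sub hm]
              have := hgood k w hw
              have := add_one_le_exp (-p)
              linarith
            calc _ ≤ (ENNReal.ofReal (exp (-p))) ^ M := by gcongr
              _ = _ := by
                rw [← ENNReal.ofReal_pow (exp_pos _).le, ← exp_nat_mul]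
                congr 2; ring
          · have hs : {x : Fin M → E | w ∈ Typ k ∧ ∀ j, (w, x j) ∉ G k} = ∅ := by
              ext x; simp [hw]
            rw [hs]; simp
      _ = _ := by simp
  have hlm : ∀ j : Fin M, ∫⁻ x, l (x j) ∂P = ∫⁻ x, l x ∂Q := fun j =>
    (measurePreserving_eval (fun _ : Fin M => Q) j).lintegral_comp hl
  let Φ : (Fin M → E) → ℝ≥0∞ := fun x =>
    (∑ k, Q {w | w ∈ Typ k ∧ ∀ j, (w, x j) ∉ G k}) * p0⁻¹ + (∑ j, l (x j)) * B⁻¹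
  have hΦm : Measurable Φ := by
    have h1 := Finset.measurable_sum (Finset.univ : Finset ι) (fun k _ => hbadm k)
    have h2 : Measurable (fun x : Fin M → E => ∑ j, l (x j)) :=
      Finset.measurable_sum _ (fun j _ => hl.comp (measurable_pi_apply j))
    exact (h1.mul_const _).add (h2.mul_const _)
  have hΦ : ∫⁻ x, Φ x ∂P < 1 := by
    refine lt_of_le_of_lt ?_ hsum
    have h2 : Measurable (fun x : Fin M → E => (∑ j, l (x j)) * B⁻¹) :=
      (Finset.measurable_sum _ (fun j _ => hl.comp (measurable_pi_apply j))).mul_const _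
    rw [lintegral_add_right _ h2, lintegral_mul_const _
      (Finset.measurable_sum _ (fun k _ => hbadm k)), lintegral_mul_const (f := fun x : Fin M → E => ∑ j, l (x j)) _
      (Finset.measurable_sum _ (fun j _ => hl.comp (measurable_pi_apply j))),
      lintegral_finsetSum _ (fun k _ => hbadm k),
      lintegral_finsetSum (f := fun (j : Fin M) (x : Fin M → E) => l (x j)) _
        (fun j _ => hl.comp (measurable_pi_apply j))]
    simp_rw [hlm]
    gcongr
    · refine (Finset.sum_le_sum fun k _ => hbad k).trans ?_
      simp
    · simp
  obtain ⟨x, hx⟩ := exists_le_lintegral (μ := P) hΦm.aemeasurable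
  have hx1 : Φ x ≤ 1 := hx.trans hΦ.le
  refine ⟨x, fun k => ?_, fun j => ?_⟩
  · have : Q {w | w ∈ Typ k ∧ ∀ j, (w, x j) ∉ G k} * p0⁻¹ ≤ 1 := by
      refine le_trans ?_ hx1
      refine le_trans ?_ le_self_add
      gcongr
      exact Finset.single_le_sum (f := fun k => Q {w | w ∈ Typ k ∧ ∀ j, (w, x j) ∉ G k})
        (fun _ _ => zero_le) (Finset.mem_univ k)
    rw [← div_eq_mul_inv] at this
    simpa using (ENNReal.div_le_iff hp0 hp0').1 this
  · have : l (x j) * B⁻¹ ≤ 1 := by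
      refine le_trans ?_ hx1
      refine le_trans ?_ le_add_self
      gcongr
      exact Finset.single_le_sum (f := fun j => l (x j))
        (fun _ _ => zero_le) (Finset.mem_univ j)
    rw [← div_eq_mul_inv] at this
    simpa using (ENNReal.div_le_iff hB hB').1 this


lemma neg_log_le {y : ℝ} (hy : y ≤ 1 / 2) : -log (1 - y) ≤ y + 2 * y ^ 2 := by
  have h := one_sub_inv_le_log_of_pos (show 0 < 1 - y by linarith)
  have h2 : (1 - y)⁻¹ ≤ 1 + y + 2 * y ^ 2 := by
    rw [inv_le_iff_one_le_mul₀ (by linarith)]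
    nlinarith [mul_nonneg (sq_nonneg y) (show 0 ≤ 1 - 2 * y by linarith)]
  linarith

lemma typ {n : ℕ} (c : Fin n → ℝ) (hc0 : ∀ i, 0 ≤ c i) (hc1 : ∀ i, c i ≤ 1) (γ : ℝ)
    (hγ : 0 < γ) (hγ1 : γ ≤ 1) :
    (_root_.stdGaussian n).real {w | ∑ i, c i + γ * n < ∑ i, c i * w i ^ 2}
      ≤ exp (-(γ ^ 2 / 16 * n)) := by
  set t := γ / 8 with ht
  have hpos : ∀ i, 0 < 1 + 2 * (-t * c i) * 1 ^ 2 := fun i => by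
    nlinarith [hc0 i, hc1 i]
  have hI := gaussN_int (-t) 1 c 0 hpos
  have hE := gaussN (-t) 1 c 0 hpos
  have hms : MeasurableSet {w : Fin n → ℝ | ∑ i, c i + γ * n < ∑ i, c i * w i ^ 2} := by
    apply measurableSet_lt <;> fun_prop
  rw [← integral_indicator_one hms]
  calc _ ≤ ∫ x, exp (-(t * (∑ i, c i + γ * n))) *
          exp (-(-t * ∑ i, c i * ((0 : Fin n → ℝ) i - 1 * x i) ^ 2)) ∂(_root_.stdGaussian n) := by
        refine integral_mono ?_ (hI.const_mul _) ?_
        · exact (integrable_const (1 : ℝ)).indicator hms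
        · intro x
          simp only [Set.indicator, Set.mem_ofPred_eq, Pi.one_apply]
          split_ifs with h
          · rw [← exp_add]
            apply one_le_exp
            simp only [Pi.zero_apply, zero_sub, one_mul, neg_sq]
            nlinarith
          · positivity
    _ ≤ _ := by
        rw [integral_const_mul, hE, ← exp_add]
        apply exp_le_exp.2
        have h1 : ∀ i, (-(1 / 2) * log (1 + 2 * (-t * c i) * 1 ^ 2)
          - (-t * c i) * (0 : Fin n → ℝ) i ^ 2 / (1 + 2 * (-t * c i) * 1 ^ 2))
          ≤ t * c i + 4 * t ^ 2 := by
          intro i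
          have := neg_log_le (y := 2 * t * c i) (by nlinarith [hc0 i, hc1 i])
          have e : 1 + 2 * (-t * c i) * 1 ^ 2 = 1 - 2 * t * c i := by ring
          rw [e]
          have h4 : c i ^ 2 ≤ 1 := by nlinarith [hc0 i, hc1 i]
          simp only [Pi.zero_apply, ne_eq, OfNat.ofNat_ne_zero, not_false_eq_true, zero_pow,
            mul_zero, zero_div, sub_zero]
          nlinarith [mul_le_mul_of_nonneg_left h4 (sq_nonneg t)]
        have h2 := Finset.sum_le_sum (s := Finset.univ) fun i _ => h1 i
        rw [Finset.sum_add_distrib, ← Finset.mul_sum, Finset.sum_const, Finset.card_univ,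
          Fintype.card_fin, nsmul_eq_mul] at h2
        have e2 : t * γ * n = γ ^ 2 / 8 * n := by rw [ht]; ring
        have e3 : n * (4 * t ^ 2) = γ ^ 2 / 16 * n := by rw [ht]; ring
        nlinarith

/-- One-dimensional inequality comparing partition functions. -/
lemma z1 (u w q θ : ℝ) (hu : 0 ≤ u) (hq : 0 < q) (hθ : |θ| ≤ 1 / 2) :
    (-(1 / 2) * log (1 + (1 - θ) * u) - (1 - θ) * u / (2 * q) * w ^ 2 / (1 + (1 - θ) * u))
      ≤ (-(1 / 2) * log (1 + u) - u / (2 * q) * w ^ 2 / (1 + u))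
        + θ * (1 / (2 * q)) * (u / (1 + u) * (1 - u / (1 + u)) * w ^ 2 + q * (u / (1 + u)))
        + θ ^ 2 * (1 + (u / (1 + u)) ^ 2 * w ^ 2 / q) := by
  obtain ⟨h1, h2⟩ := abs_le.1 hθ
  set s := u / (1 + u) with hs
  have hu1 : 0 < 1 + u := by linarith
  have hs0 : 0 ≤ s := by positivity
  have hs1 : s ≤ 1 := by rw [hs, div_le_one hu1]; linarith
  have hts : θ * s ≤ 1 / 2 := by nlinarith
  have e1 : 1 + (1 - θ) * u = (1 + u) * (1 - θ * s) := by rw [hs]; field_simp; ring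
  have hp : 0 < 1 - θ * s := by linarith
  have hlog : log (1 + (1 - θ) * u) = log (1 + u) + log (1 - θ * s) := by
    rw [e1, log_mul hu1.ne' hp.ne']
  have hnl := neg_log_le hts
  have hs2 : s ^ 2 ≤ 1 := by nlinarith
  have e2 : (1 - θ) * u / (2 * q) * w ^ 2 / (1 + (1 - θ) * u)
      = u / (2 * q) * w ^ 2 / (1 + u) - w ^ 2 / (2 * q) * (θ * s * (1 - s) / (1 - θ * s)) := by
    have f1 : (1 - θ) * u / (2 * q) * w ^ 2 / (1 + (1 - θ) * u)
        = (1 - θ) * (w ^ 2 / (2 * q)) * s / (1 - θ * s) := by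
      rw [e1, ← div_div, hs]; congr 1; ring
    have f2 : u / (2 * q) * w ^ 2 / (1 + u) = w ^ 2 / (2 * q) * s := by rw [hs]; ring
    have f3 := div_mul_cancel₀ (θ * s * (1 - s)) hp.ne'
    rw [f1, f2, div_eq_iff hp.ne']
    linear_combination (w ^ 2 / (2 * q)) * f3
  have h3 : θ * s * (1 - s) / (1 - θ * s) ≤ θ * s * (1 - s) + 2 * θ ^ 2 * s ^ 2 := by
    rw [div_le_iff₀ hp]
    have a1 : 0 ≤ θ ^ 2 * s ^ 2 := by positivity
    nlinarith [mul_nonneg a1 (show 0 ≤ 1 - 2 * (θ * s) by linarith), mul_nonneg a1 hs0]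
  have h4 : w ^ 2 / (2 * q) * (θ * s * (1 - s) / (1 - θ * s))
      ≤ w ^ 2 / (2 * q) * (θ * s * (1 - s) + 2 * θ ^ 2 * s ^ 2) :=
    mul_le_mul_of_nonneg_left h3 (by positivity)
  have h5 : θ ^ 2 * s ^ 2 ≤ θ ^ 2 := by nlinarith [sq_nonneg θ]
  have e3 : w ^ 2 / (2 * q) * (θ * s * (1 - s) + 2 * θ ^ 2 * s ^ 2)
      = θ * (1 / (2 * q)) * (s * (1 - s) * w ^ 2) + θ ^ 2 * (s ^ 2 * w ^ 2 / q) := by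
    field_simp
  have e4 : θ * (1 / (2 * q)) * (s * (1 - s) * w ^ 2 + q * s)
      = θ * (1 / (2 * q)) * (s * (1 - s) * w ^ 2) + θ * s / 2 := by field_simp
  rw [hlog, e2, e4]
  nlinarith


lemma expid (β θ a b d : ℝ) : exp (β * a) * (exp (-(β * (1 - 0) * d)) - exp (-(θ * β * b)) *
        exp (-(β * (1 - θ) * d)) - exp (θ * β * a) * exp (-(β * (1 - -θ) * d)))
        = exp (β * (a - d)) * (1 - exp (θ * β * (d - b)) - exp (θ * β * (a - d))) := by
  have h1 : exp (β * (a - d)) = exp (β * a) * exp (-(β * (1 - 0) * d)) := by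
    rw [← exp_add]; congr 1; ring
  have h2 : exp (-(θ * β * b)) * exp (-(β * (1 - θ) * d))
      = exp (-(β * (1 - 0) * d)) * exp (θ * β * (d - b)) := by
    rw [← exp_add, ← exp_add]; congr 1; ring
  have h3 : exp (θ * β * a) * exp (-(β * (1 - -θ) * d))
      = exp (-(β * (1 - 0) * d)) * exp (θ * β * (a - d)) := by
    rw [← exp_add, ← exp_add]; congr 1; ring
  rw [h1, h2, h3]; ring

set_option maxHeartbeats 1000000 in
/-- Lower bound on the probability that a Gaussian codeword is good, in the eigenbasis. -/
lemma core {n : ℕ} (lam s w : Fin n → ℝ) (T q γ θ : ℝ) (hlam : ∀ i, 0 ≤ lam i)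
    (hT : 0 < T) (hq : 0 < q) (hs : ∀ i, s i = lam i * T / (1 + lam i * T))
    (hw1 : ∑ i, s i ^ 2 * w i ^ 2 ≤ ∑ i, s i ^ 2 + γ * n)
    (hw2 : ∑ i, s i * (1 - s i) * w i ^ 2 ≤ ∑ i, s i * (1 - s i) + γ * n)
    (hθ0 : 0 < θ) (hθ1 : θ ≤ 1 / 2)
    (hθ : exp (-(θ * γ * n / (2 * q)) + θ ^ 2 * (n * (1 + (1 + γ) / q))) ≤ 1 / 4) :
    1 / 2 * exp (-(1 / 2 * ∑ i, log (1 + lam i * T)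
        + 1 / (2 * q) * (∑ i, s i ^ 2 - q * ∑ i, s i) + γ * n / q))
      ≤ (_root_.stdGaussian n).real
        {x | ∑ i, lam i * (w i - √q * x i) ^ 2
          ≤ 1 / T * (∑ i, s i * (1 - s i) + q * ∑ i, s i + 2 * γ * n)} := by
  set Q := _root_.stdGaussian n with hQ
  have : IsProbabilityMeasure Q := by rw [hQ]; infer_instance
  set d : (Fin n → ℝ) → ℝ := fun x => ∑ i, lam i * (w i - √q * x i) ^ 2 with hd
  set X := ∑ i, s i * (1 - s i) * w i ^ 2 with hX
  set S := ∑ i, s i with hS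
  set A := 1 / T * (X + q * S) with hA
  set a := A - γ * n / T with ha
  set b' := A + γ * n / T with hb'
  set β := T / (2 * q) with hβ
  have hβ0 : 0 < β := by positivity
  have hu : ∀ i, 0 ≤ lam i * T := fun i => mul_nonneg (hlam i) hT.le
  have hs1 : ∀ i, s i ^ 2 ≤ 1 := by
    intro i
    have h1 : s i ≤ 1 := by rw [hs, div_le_one (by linarith [hu i])]; linarith
    have h0 : 0 ≤ s i := by rw [hs]; exact div_nonneg (hu i) (by linarith [hu i])
    nlinarith
  have hsum2 : ∑ i, s i ^ 2 ≤ n := by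
    calc ∑ i, s i ^ 2 ≤ ∑ _i : Fin n, (1 : ℝ) := Finset.sum_le_sum fun i _ => hs1 i
      _ = n := by simp
  -- partition functions
  set Lz : ℝ → ℝ := fun t => ∑ i, (-(1 / 2) * log (1 + (1 - t) * (lam i * T))
      - (1 - t) * (lam i * T) / (2 * q) * w i ^ 2 / (1 + (1 - t) * (lam i * T))) with hLz
  have hsq : √q ^ 2 = q := sq_sqrt hq.le
  have hk : ∀ t i, 2 * (β * (1 - t) * lam i) * √q ^ 2 = (1 - t) * (lam i * T) := by
    intro t i; rw [hsq, hβ]; field_simp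
  have hk' : ∀ t i, β * (1 - t) * lam i = (1 - t) * (lam i * T) / (2 * q) := by
    intro t i; rw [hβ]; field_simp
  have hpos : ∀ t, |t| ≤ 1 / 2 → ∀ i, 0 < 1 + 2 * (β * (1 - t) * lam i) * √q ^ 2 := by
    intro t ht i
    rw [hk]
    have := (abs_le.1 ht).2
    have := mul_nonneg (show 0 ≤ 1 - t by linarith) (hu i)
    linarith
  have hZ : ∀ t, |t| ≤ 1 / 2 → ∫ x, exp (-(β * (1 - t) * d x)) ∂Q = exp (Lz t) := by
    intro t ht
    have := gaussN (β * (1 - t)) (√q) lam w (hpos t ht)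
    rw [this]
    congr 1
    refine Finset.sum_congr rfl fun i _ => ?_
    rw [hk, hk']
  have hZi : ∀ t, |t| ≤ 1 / 2 → Integrable (fun x => exp (-(β * (1 - t) * d x))) Q :=
    fun t ht => gaussN_int (β * (1 - t)) (√q) lam w (hpos t ht)
  have hLb : ∀ t, |t| ≤ 1 / 2 → t ^ 2 = θ ^ 2 → Lz t ≤ Lz 0 + t * β * A
      + θ ^ 2 * (n * (1 + (1 + γ) / q)) := by
    intro t ht ht2
    have h1 := Finset.sum_le_sum (s := Finset.univ) fun i _ => z1 (lam i * T) (w i) q t (hu i) hq ht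
    simp_rw [← hs] at h1
    rw [Finset.sum_add_distrib, Finset.sum_add_distrib, ← Finset.mul_sum, ← Finset.mul_sum,
      Finset.sum_add_distrib, Finset.sum_add_distrib, ← Finset.mul_sum, ← Finset.sum_div] at h1
    have e1 : Lz 0 = ∑ i, (-(1 / 2) * log (1 + lam i * T)
      - lam i * T / (2 * q) * w i ^ 2 / (1 + lam i * T)) := by simp [hLz]
    have e2 : t * β * A = t * (1 / (2 * q)) * (X + q * S) := by
      rw [hA, hβ]; field_simp
    rw [e1, e2]
    refine h1.trans ?_
    rw [ht2]
    have h3 : (∑ i, s i ^ 2 * w i ^ 2) / q ≤ n * ((1 + γ) / q) := by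
      rw [← mul_div_assoc]
      apply div_le_div_of_nonneg_right _ hq.le
      nlinarith
    have h4 : ∑ _i : Fin n, (1 : ℝ) = n := by simp
    rw [h4]
    have := mul_le_mul_of_nonneg_left h3 (sq_nonneg θ)
    nlinarith
  have abs1 : |θ| ≤ 1 / 2 := by rw [abs_of_pos hθ0]; exact hθ1
  have abs2 : |-θ| ≤ 1 / 2 := by rw [abs_neg]; exact abs1
  have abs0 : |(0 : ℝ)| ≤ 1 / 2 := by norm_num
  have hms : MeasurableSet {x | d x ≤ b'} := by
    apply measurableSet_le
    · simp only [hd]; fun_prop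
    · fun_prop
  have hb : b' ≤ 1 / T * (∑ i, s i * (1 - s i) + q * S + 2 * γ * n) := by
    have : b' = 1 / T * (X + q * S + γ * n) := by rw [hb', hA]; ring
    rw [this]
    apply mul_le_mul_of_nonneg_left _ (by positivity)
    linarith
  have hsub : Q.real {x | d x ≤ b'} ≤ Q.real {x | d x
      ≤ 1 / T * (∑ i, s i * (1 - s i) + q * S + 2 * γ * n)} := by
    exact measureReal_mono (fun x hx => le_trans hx hb) (measure_ne_top _ _)
  refine le_trans ?_ hsub
  rw [← integral_indicator_one hms]
  have hmain : exp (β * a) * (exp (Lz 0) - exp (-(θ * β * b')) * exp (Lz θ)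
      - exp (θ * β * a) * exp (Lz (-θ))) ≤ ∫ x, Set.indicator {x | d x ≤ b'} 1 x ∂Q := by
    have i1 : Integrable (fun x => exp (-(β * (1 - 0) * d x)) - exp (-(θ * β * b')) *
        exp (-(β * (1 - θ) * d x))) Q := (hZi 0 abs0).sub ((hZi θ abs1).const_mul _)
    have i2 : Integrable (fun x => exp (-(β * (1 - 0) * d x)) - exp (-(θ * β * b')) *
        exp (-(β * (1 - θ) * d x)) - exp (θ * β * a) * exp (-(β * (1 - -θ) * d x))) Q :=
      i1.sub ((hZi (-θ) abs2).const_mul _)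
    rw [← hZ 0 abs0, ← hZ θ abs1, ← hZ (-θ) abs2, ← integral_const_mul, ← integral_const_mul,
      ← integral_sub (hZi 0 abs0) ((hZi θ abs1).const_mul _),
      ← integral_sub i1 ((hZi (-θ) abs2).const_mul _),
      ← integral_const_mul]
    refine integral_mono (i2.const_mul _)
      ((integrable_const (1 : ℝ)).indicator hms) ?_
    intro x
    have e : exp (β * a) * (exp (-(β * (1 - 0) * d x)) - exp (-(θ * β * b')) *
        exp (-(β * (1 - θ) * d x)) - exp (θ * β * a) * exp (-(β * (1 - -θ) * d x)))
        = exp (β * (a - d x)) * (1 - exp (θ * β * (d x - b')) - exp (θ * β * (a - d x))) := by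
      exact expid β θ a b' (d x)
    refine e.le.trans ?_
    have hθβ : 0 < θ * β := by positivity
    have p1 := exp_pos (θ * β * (d x - b'))
    have p2 := exp_pos (θ * β * (a - d x))
    have p3 := exp_pos (β * (a - d x))
    simp only [Set.indicator, Set.mem_ofPred_eq, Pi.one_apply]
    split_ifs with h
    · by_cases h2 : d x < a
      · have : 1 ≤ exp (θ * β * (a - d x)) := one_le_exp (by nlinarith)
        nlinarith
      · have : exp (β * (a - d x)) ≤ 1 := exp_le_one_iff.2 (by nlinarith)
        nlinarith
    · have : 1 ≤ exp (θ * β * (d x - b')) := one_le_exp (by nlinarith)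
      nlinarith
  refine le_trans ?_ hmain
  have hβγ : β * (γ * n / T) = γ * n / (2 * q) := by rw [hβ]; field_simp
  have t1 : exp (-(θ * β * b')) * exp (Lz θ) ≤ 1 / 4 * exp (Lz 0) := by
    refine le_trans ?_ (mul_le_mul_of_nonneg_right hθ (exp_pos _).le)
    rw [← exp_add, ← exp_add]
    apply exp_le_exp.2
    have := hLb θ abs1 rfl
    have e : θ * β * b' = θ * β * A + θ * γ * n / (2 * q) := by
      rw [hb']; linear_combination θ * hβγ
    linarith
  have t2 : exp (θ * β * a) * exp (Lz (-θ)) ≤ 1 / 4 * exp (Lz 0) := by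
    refine le_trans ?_ (mul_le_mul_of_nonneg_right hθ (exp_pos _).le)
    rw [← exp_add, ← exp_add]
    apply exp_le_exp.2
    have := hLb (-θ) abs2 (by ring)
    have e : θ * β * a = θ * β * A - θ * γ * n / (2 * q) := by
      rw [ha]; linear_combination (-θ) * hβγ
    linarith
  have t3 : exp (β * a) * (1 / 2 * exp (Lz 0)) ≤ exp (β * a) * (exp (Lz 0)
      - exp (-(θ * β * b')) * exp (Lz θ) - exp (θ * β * a) * exp (Lz (-θ))) := by
    apply mul_le_mul_of_nonneg_left _ (exp_pos _).le
    linarith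
  refine le_trans ?_ t3
  have e : exp (β * a) * (1 / 2 * exp (Lz 0)) = 1 / 2 * exp (β * a + Lz 0) := by
    rw [exp_add]; ring
  rw [e]
  apply mul_le_mul_of_nonneg_left _ (by norm_num)
  apply exp_le_exp.2
  have e1 : Lz 0 = -(1 / 2) * ∑ i, log (1 + lam i * T) - 1 / (2 * q) * ∑ i, s i * w i ^ 2 := by
    simp only [hLz, sub_zero, one_mul]
    rw [Finset.sum_sub_distrib, Finset.mul_sum, Finset.mul_sum]
    congr 1
    refine Finset.sum_congr rfl fun i _ => ?_
    rw [hs]; ring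
  have e2 : β * a = 1 / (2 * q) * (X + q * S) - γ * n / (2 * q) := by
    rw [ha, mul_sub, hβγ, hA, hβ]; field_simp
  have e3 : ∑ i, s i * w i ^ 2 = X + ∑ i, s i ^ 2 * w i ^ 2 := by
    rw [hX, ← Finset.sum_add_distrib]
    refine Finset.sum_congr rfl fun i _ => by ring
  have e4 : 1 / (2 * q) * (∑ i, s i ^ 2 * w i ^ 2)
      ≤ 1 / (2 * q) * (∑ i, s i ^ 2 + γ * n) :=
    mul_le_mul_of_nonneg_left hw1 (by positivity)
  have e5 : γ * n / q = 2 * (1 / (2 * q) * (γ * n)) := by field_simp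
  have e6 : γ * n / (2 * q) = 1 / (2 * q) * (γ * n) := by field_simp
  rw [e1, e2, e3, e5, e6]
  nlinarith


lemma exT {n : ℕ} (hn : 0 < n) (lam : Fin n → ℝ) (hlam : ∀ i, 0 ≤ lam i)
    (hsum : ∑ i, lam i = n) (R : ℝ) (hR : 0 < R) :
    0 < Trc lam R ∧ Rrc lam (Trc lam R) = R := by
  apply Classical.epsilon_spec (p := fun T => 0 < T ∧ Rrc lam T = R)
  have hn' : (0 : ℝ) < n := by exact_mod_cast hn
  obtain ⟨i, hi⟩ : ∃ i, 0 < lam i := by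
    by_contra h
    push Not at h
    have := Finset.sum_nonpos (s := Finset.univ) fun i _ => h i
    linarith
  set T1 := (2 ^ (2 * n * R) - 1) / lam i with hT1
  have h2 : (1 : ℝ) ≤ 2 ^ (2 * n * R) := one_le_rpow (by norm_num) (by positivity)
  have hT1' : 0 ≤ T1 := div_nonneg (by linarith) hi.le
  have hpos : ∀ T, 0 ≤ T → ∀ j, 1 ≤ 1 + lam j * T := fun T hT j => by
    have := mul_nonneg (hlam j) hT
    linarith
  have hc : ContinuousOn (Rrc lam) (Set.Icc 0 T1) := by
    unfold Rrc
    apply ContinuousOn.mul continuousOn_const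
    apply continuousOn_finsetSum
    intro j _
    unfold logb
    apply ContinuousOn.div_const
    apply ContinuousOn.log
    · fun_prop
    · intro T hT
      have := hpos T hT.1 j
      positivity
  have h0 : Rrc lam 0 = 0 := by simp [Rrc]
  have hR1 : R ≤ Rrc lam T1 := by
    unfold Rrc
    have h3 : logb 2 (1 + lam i * T1) = 2 * n * R := by
      rw [hT1, mul_div_cancel₀ _ hi.ne', add_sub_cancel]
      exact logb_rpow (by norm_num) (by norm_num)
    have h4 : logb 2 (1 + lam i * T1) ≤ ∑ j, logb 2 (1 + lam j * T1) :=
      Finset.single_le_sum (f := fun j => logb 2 (1 + lam j * T1))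
        (fun j _ => logb_nonneg (by norm_num) (hpos T1 hT1' j)) (Finset.mem_univ i)
    rw [h3] at h4
    calc R = 1 / (2 * n) * (2 * n * R) := by field_simp
      _ ≤ _ := mul_le_mul_of_nonneg_left h4 (by positivity)
  obtain ⟨T, hT, hTR⟩ := intermediate_value_Icc hT1' hc (show R ∈ Set.Icc _ _ by
    rw [h0]; exact ⟨hR.le, hR1⟩)
  refine ⟨T, lt_of_le_of_ne hT.1 ?_, hTR⟩
  rintro rfl
  rw [h0] at hTR
  linarith

lemma stepA {n : ℕ} (hn : 0 < n) (lam : Fin n → ℝ) (hlam : ∀ i, 0 ≤ lam i)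
    (hsum : ∑ i, lam i = n) (R η : ℝ) (hR : 0 < R) (hη : 0 < η) :
    ∃ T, min (2 * R * log 2) (1 / η) ≤ T ∧ ∑ i, log (1 + lam i * T) ≤ 2 * n * (R * log 2) ∧
      ∑ i, lam i / (1 + lam i * T) ≤ n * (DDrc lam R + η) := by
  obtain ⟨h0, h1⟩ := exT hn lam hlam hsum R hR
  have hn' : (0 : ℝ) < n := by exact_mod_cast hn
  have hl2 : 0 < log 2 := log_pos (by norm_num)
  set T0 := Trc lam R with hT0
  have hpos : ∀ T, 0 ≤ T → ∀ j, 1 ≤ 1 + lam j * T := fun T hT j => by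
    have := mul_nonneg (hlam j) hT
    linarith
  have hDD : n * DDrc lam R = ∑ i, lam i / (1 + lam i * T0) := by
    unfold DDrc Drc; rw [← hT0, ← mul_assoc, mul_one_div_cancel hn'.ne', one_mul]
  have hRR : ∑ i, log (1 + lam i * T0) = 2 * n * (R * log 2) := by
    unfold Rrc logb at h1
    rw [← Finset.sum_div] at h1
    field_simp at h1
    linarith
  have hTlow : 2 * R * log 2 ≤ T0 := by
    have : ∑ i, log (1 + lam i * T0) ≤ ∑ i, lam i * T0 := Finset.sum_le_sum fun i _ => by
      have := log_le_sub_one_of_pos (show 0 < 1 + lam i * T0 by linarith [hpos T0 h0.le i])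
      linarith
    rw [hRR, ← Finset.sum_mul, hsum] at this
    have : n * (2 * R * log 2) ≤ n * T0 := by linarith
    exact le_of_mul_le_mul_left this hn'
  rcases le_total T0 (1 / η) with h | h
  · refine ⟨T0, (min_le_left _ _).trans hTlow, hRR.le, ?_⟩
    rw [mul_add, hDD]
    have : 0 < n * η := by positivity
    linarith
  · have hη' : 0 < 1 / η := by positivity
    refine ⟨1 / η, min_le_right _ _, ?_, ?_⟩
    · rw [← hRR]
      refine Finset.sum_le_sum fun i _ => ?_
      apply log_le_log (by linarith [hpos (1 / η) hη'.le i])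
      have := mul_le_mul_of_nonneg_left h (hlam i)
      linarith
    · have hd : 0 ≤ n * DDrc lam R := by
        rw [hDD]
        exact Finset.sum_nonneg fun i _ => div_nonneg (hlam i) (by linarith [hpos T0 h0.le i])
      have : ∑ i, lam i / (1 + lam i * (1 / η)) ≤ ∑ _i : Fin n, η := Finset.sum_le_sum fun i _ => by
        rw [div_le_iff₀ (by linarith [hpos (1 / η) hη'.le i])]
        have : η * (lam i * (1 / η)) = lam i := by field_simp
        rw [mul_add, this]; linarith
      rw [Finset.sum_const, Finset.card_univ, Fintype.card_fin, nsmul_eq_mul] at this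
      rw [mul_add]; linarith

lemma exq (δ S S2 : ℝ) (hδ : 0 < δ) (h2 : 0 ≤ S2) (hS : S2 ≤ S) :
    ∃ k : Fin ⌈1 / δ⌉₊, S2 ≤ ((k : ℕ) + 1) * δ * S ∧ ((k : ℕ) + 1) * δ * S ≤ S2 + δ * S := by
  have hK : 0 < ⌈1 / δ⌉₊ := Nat.ceil_pos.2 (by positivity)
  rcases eq_or_lt_of_le h2 with h | h
  · refine ⟨⟨0, hK⟩, ?_, ?_⟩
    · rw [← h]
      have : 0 ≤ S := h2.trans hS
      positivity
    · simp [← h]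
  · have hS0 : 0 < S := h.trans_le hS
    set r := S2 / S with hr
    have hr1 : r ≤ 1 := by rw [hr, div_le_one hS0]; exact hS
    have hr0 : 0 < r := by positivity
    have hrS : r * S = S2 := by rw [hr]; field_simp
    have hc : 0 < ⌈r / δ⌉₊ := Nat.ceil_pos.2 (by positivity)
    have hcK : ⌈r / δ⌉₊ ≤ ⌈1 / δ⌉₊ := Nat.ceil_mono (by gcongr)
    refine ⟨⟨⌈r / δ⌉₊ - 1, by omega⟩, ?_, ?_⟩
    all_goals
      have e : ((⌈r / δ⌉₊ - 1 : ℕ) : ℝ) + 1 = (⌈r / δ⌉₊ : ℝ) := by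
        have : ⌈r / δ⌉₊ - 1 + 1 = ⌈r / δ⌉₊ := by omega
        exact_mod_cast this
      simp only [e]
      rw [← hrS]
    · apply mul_le_mul_of_nonneg_right _ hS0.le
      have := Nat.le_ceil (r / δ)
      rwa [div_le_iff₀ hδ] at this
    · rw [← add_mul]
      apply mul_le_mul_of_nonneg_right _ hS0.le
      have := (Nat.ceil_lt_add_one (a := r / δ) (by positivity)).le
      calc (⌈r / δ⌉₊ : ℝ) * δ ≤ (r / δ + 1) * δ := by gcongr
        _ = r + δ := by field_simp

lemma dSig_eig {n : ℕ} (U : Matrix (Fin n) (Fin n) ℝ) (lam w v : Fin n → ℝ) :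
    dSig (U * Matrix.diagonal lam * Uᵀ) w v
      = ∑ i, lam i * ((Uᵀ *ᵥ w) i - (Uᵀ *ᵥ v) i) ^ 2 := by
  unfold dSig
  rw [← Matrix.mulVec_mulVec, ← Matrix.mulVec_mulVec, Matrix.dotProduct_mulVec,
    ← Matrix.mulVec_transpose, Matrix.mulVec_sub]
  simp only [dotProduct, Matrix.mulVec_diagonal, Pi.sub_apply]
  refine Finset.sum_congr rfl fun i _ => by ring

lemma eig_facts {n : ℕ} (Sig U : Matrix (Fin n) (Fin n) ℝ) (lam : Fin n → ℝ)
    (hP : Sig.PosSemidef) (ht : Sig.trace = n) (hU : U * Uᵀ = 1)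
    (hS : Sig = U * Matrix.diagonal lam * Uᵀ) : (∀ i, 0 ≤ lam i) ∧ ∑ i, lam i = n := by
  have hU' : Uᵀ * U = 1 := mul_eq_one_comm.1 hU
  constructor
  · have h := hP.conjTranspose_mul_mul_same U
    have e : Uᴴ * Sig * U = Matrix.diagonal lam := by
      rw [Matrix.conjTranspose_eq_transpose_of_trivial, hS]
      calc Uᵀ * (U * Matrix.diagonal lam * Uᵀ) * U
          = (Uᵀ * U) * Matrix.diagonal lam * (Uᵀ * U) := by simp only [Matrix.mul_assoc]
        _ = _ := by rw [hU']; simp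
    rw [e] at h
    exact Matrix.posSemidef_diagonal_iff.1 h
  · rw [← ht, hS, Matrix.trace_mul_comm, ← Matrix.mul_assoc, hU', one_mul, Matrix.trace_diagonal]


lemma perSig {n : ℕ} (hn : 0 < n) (Sig U : Matrix (Fin n) (Fin n) ℝ) (lam : Fin n → ℝ)
    (hP : Sig.PosSemidef) (ht : Sig.trace = n) (hU : U * Uᵀ = 1)
    (hS : Sig = U * Matrix.diagonal lam * Uᵀ) (R η δ γ : ℝ) (hR : 0 < R) (hη : 0 < η)
    (hδ : 0 < δ) (hδ1 : δ ≤ 1) (hγ : 0 < γ) (hγ1 : γ ≤ 1)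
    (hbig : exp (-(γ ^ 2 / 128 * n)) ≤ 1 / 4) :
    ∃ (k : Fin ⌈1 / δ⌉₊) (Typ : Set (Fin n → ℝ)), MeasurableSet Typ ∧
      (_root_.stdGaussian n).real Typᶜ ≤ 2 * exp (-(γ ^ 2 / 16 * n)) ∧
      ∀ w ∈ Typ, 1 / 2 * exp (-(n * (R * log 2 + γ / δ))) ≤
        (_root_.stdGaussian n).real {x | dSig Sig w (√(((k : ℕ) + 1) * δ) • x) ≤
          n * (DDrc lam R + η + (δ + 2 * γ) / min (2 * R * log 2) (1 / η))} := by
  obtain ⟨hlam, hsum⟩ := eig_facts Sig U lam hP ht hU hS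
  obtain ⟨T, hT1, hT2, hT3⟩ := stepA hn lam hlam hsum R η hR hη
  have hn' : (0 : ℝ) < n := by exact_mod_cast hn
  have hl2 : 0 < log 2 := log_pos (by norm_num)
  set Tm := min (2 * R * log 2) (1 / η) with hTm
  have hTm0 : 0 < Tm := lt_min (by positivity) (by positivity)
  have hT : 0 < T := hTm0.trans_le hT1
  set s : Fin n → ℝ := fun i => lam i * T / (1 + lam i * T) with hs
  have hu : ∀ i, 0 ≤ lam i * T := fun i => mul_nonneg (hlam i) hT.le
  have hs0 : ∀ i, 0 ≤ s i := fun i => div_nonneg (hu i) (by linarith [hu i])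
  have hs1 : ∀ i, s i ≤ 1 := fun i => by
    simp only [hs]; rw [div_le_one (by linarith [hu i])]; linarith
  have hs2 : ∀ i, s i ^ 2 ≤ s i := fun i => by nlinarith [hs0 i, hs1 i]
  obtain ⟨k, hk1, hk2⟩ := exq δ (∑ i, s i) (∑ i, s i ^ 2) hδ
    (Finset.sum_nonneg fun i _ => sq_nonneg _) (Finset.sum_le_sum fun i _ => hs2 i)
  set q : ℝ := ((k : ℕ) + 1) * δ with hq
  have hqδ : δ ≤ q := by
    rw [hq]; have : (0 : ℝ) ≤ (k : ℕ) := Nat.cast_nonneg _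
    nlinarith
  have hq0 : 0 < q := hδ.trans_le hqδ
  have hq2 : q ≤ 2 := by
    have h1 : ((k : ℕ) : ℝ) + 1 ≤ ⌈1 / δ⌉₊ := by exact_mod_cast k.2
    have h2 := (Nat.ceil_lt_add_one (a := 1 / δ) (by positivity)).le
    calc q ≤ (1 / δ + 1) * δ := by rw [hq]; exact mul_le_mul_of_nonneg_right (h1.trans h2) hδ.le
      _ = 1 + δ := by field_simp
      _ ≤ 2 := by linarith
  have hSn : ∑ i, s i ≤ n := by
    calc ∑ i, s i ≤ ∑ _i : Fin n, (1 : ℝ) := Finset.sum_le_sum fun i _ => hs1 i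
      _ = n := by simp
  set Typ' : Set (Fin n → ℝ) := {w | ∑ i, s i ^ 2 * w i ^ 2 ≤ ∑ i, s i ^ 2 + γ * n} ∩
    {w | ∑ i, s i * (1 - s i) * w i ^ 2 ≤ ∑ i, s i * (1 - s i) + γ * n} with hTyp'
  have hTm' : MeasurableSet Typ' := by
    apply MeasurableSet.inter
    · apply measurableSet_le <;> fun_prop
    · apply measurableSet_le <;> fun_prop
  have hrot := rot U hU
  refine ⟨k, (fun w => Uᵀ *ᵥ w) ⁻¹' Typ', hrot.measurable hTm', ?_, ?_⟩
  · rw [← Set.preimage_compl, measureReal_def, hrot.measure_preimage hTm'.compl.nullMeasurableSet,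
      ← measureReal_def]
    have h1 := typ (fun i => s i ^ 2) (fun i => sq_nonneg _)
      (fun i => (hs2 i).trans (hs1 i)) γ hγ hγ1
    have h2 := typ (fun i => s i * (1 - s i))
      (fun i => mul_nonneg (hs0 i) (by linarith [hs1 i]))
      (fun i => by nlinarith [hs0 i, hs1 i]) γ hγ hγ1
    have h3 : Typ'ᶜ ⊆ {w | ∑ i, s i ^ 2 + γ * n < ∑ i, s i ^ 2 * w i ^ 2} ∪
        {w | ∑ i, s i * (1 - s i) + γ * n < ∑ i, s i * (1 - s i) * w i ^ 2} := by
      intro w hw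
      by_contra hcon
      apply hw
      have h4 : ¬ (∑ i, s i ^ 2 + γ * n < ∑ i, s i ^ 2 * w i ^ 2) := fun h => hcon (Or.inl h)
      have h5 : ¬ (∑ i, s i * (1 - s i) + γ * n < ∑ i, s i * (1 - s i) * w i ^ 2) :=
        fun h => hcon (Or.inr h)
      exact ⟨not_lt.1 h4, not_lt.1 h5⟩
    calc _ ≤ _ := measureReal_mono h3 (measure_ne_top _ _)
      _ ≤ _ := measureReal_union_le _ _
      _ ≤ _ := by linarith
  · intro w hw
    have hc := core lam s (Uᵀ *ᵥ w) T q γ (γ / 16) hlam hT hq0 (fun i => rfl) hw.1 hw.2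
      (by positivity) (by linarith) (by
        refine le_trans (exp_le_exp.2 ?_) hbig
        have e : -(γ / 16 * γ * n / (2 * q)) + (γ / 16) ^ 2 * (n * (1 + (1 + γ) / q))
            = -(γ ^ 2 * n / q * (1 / 32 - (q + 1 + γ) / 256)) := by field_simp; ring
        rw [e]
        apply neg_le_neg
        have h1 : γ ^ 2 * n / 2 ≤ γ ^ 2 * n / q := by gcongr
        have h2 : (1 : ℝ) / 64 ≤ 1 / 32 - (q + 1 + γ) / 256 := by linarith
        have h3 : 0 ≤ γ ^ 2 * n / 2 := by positivity
        nlinarith)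
    set b := 1 / T * (∑ i, s i * (1 - s i) + q * ∑ i, s i + 2 * γ * n) with hb
    have hmeas : MeasurableSet {x : Fin n → ℝ | ∑ i, lam i * ((Uᵀ *ᵥ w) i - √q * x i) ^ 2 ≤ b} := by
      apply measurableSet_le <;> fun_prop
    have hpre : (_root_.stdGaussian n).real {x | dSig Sig w (√q • x) ≤ b}
        = (_root_.stdGaussian n).real
          {x : Fin n → ℝ | ∑ i, lam i * ((Uᵀ *ᵥ w) i - √q * x i) ^ 2 ≤ b} := by
      rw [measureReal_def, measureReal_def,
        ← hrot.measure_preimage hmeas.nullMeasurableSet]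
      congr 2
      ext x
      simp only [Set.mem_ofPred_eq, Set.mem_preimage]
      rw [hS, dSig_eig, Matrix.mulVec_smul]
      simp only [Pi.smul_apply, smul_eq_mul]
    have hbb : b ≤ n * (DDrc lam R + η + (δ + 2 * γ) / Tm) := by
      have e1 : ∑ i, s i * (1 - s i) = ∑ i, s i - ∑ i, s i ^ 2 := by
        rw [← Finset.sum_sub_distrib]; refine Finset.sum_congr rfl fun i _ => by ring
      have e2 : 1 / T * ∑ i, s i = ∑ i, lam i / (1 + lam i * T) := by
        rw [Finset.mul_sum]; refine Finset.sum_congr rfl fun i _ => ?_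
        simp only [hs]; field_simp
      have h1 : b ≤ 1 / T * ∑ i, s i + 1 / T * (n * (δ + 2 * γ)) := by
        rw [hb, ← mul_add, e1]
        apply mul_le_mul_of_nonneg_left _ (by positivity)
        nlinarith
      have h2 : 1 / T * (n * (δ + 2 * γ)) ≤ n * ((δ + 2 * γ) / Tm) := by
        rw [one_div_mul_eq_div, ← mul_div_assoc]
        gcongr
      rw [e2] at h1
      rw [mul_add]
      linarith
    have hmono : (_root_.stdGaussian n).real {x | dSig Sig w (√q • x) ≤ b} ≤
        (_root_.stdGaussian n).real {x | dSig Sig w (√q • x) ≤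
          n * (DDrc lam R + η + (δ + 2 * γ) / Tm)} :=
      measureReal_mono (fun x hx => le_trans hx hbb) (measure_ne_top _ _)
    refine le_trans ?_ hmono
    rw [hpre]
    refine le_trans ?_ hc
    apply mul_le_mul_of_nonneg_left _ (by norm_num)
    apply exp_le_exp.2
    apply neg_le_neg
    have h1 : 1 / (2 * q) * (∑ i, s i ^ 2 - q * ∑ i, s i) ≤ 0 :=
      mul_nonpos_of_nonneg_of_nonpos (by positivity) (by linarith)
    have h2 : γ * n / q ≤ n * (γ / δ) := by
      rw [mul_comm γ, mul_div_assoc]; gcongr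
    rw [mul_add]
    linarith

lemma g_int (p : ℕ) : Integrable (fun x : ℝ => x ^ p) (gaussianReal 0 1) := by
  have := (memLp_id_gaussianReal (μ := 0) (v := 1) p)
  have h := this.integrable_norm_pow'
  refine (integrable_norm_iff (by fun_prop)).1 ?_
  simpa using h

lemma g_two : ∫ x, x ^ 2 ∂(gaussianReal 0 1) = 1 := by
  have h := variance_id_gaussianReal (μ := 0) (v := 1)
  rw [variance_eq_sub (memLp_id_gaussianReal 2)] at h
  simpa using h

lemma coord {n : ℕ} (i : Fin n) (p : ℕ) :
    Integrable (fun w : Fin n → ℝ => w i ^ p) (_root_.stdGaussian n) ∧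
    ∫ w, w i ^ p ∂(_root_.stdGaussian n) = ∫ x, x ^ p ∂(gaussianReal 0 1) := by
  have h := measurePreserving_eval (fun _ : Fin n => gaussianReal 0 1) i
  constructor
  · exact h.integrable_comp_of_integrable (g_int p)
  · have := integral_map (μ := _root_.stdGaussian n) (φ := Function.eval i)
      (measurable_pi_apply i).aemeasurable (f := fun x : ℝ => x ^ p) (by fun_prop)
    rw [show (_root_.stdGaussian n).map (Function.eval i) = gaussianReal 0 1 from h.map_eq] at this
    exact this.symm

lemma sumsq {n : ℕ} : Integrable (fun w : Fin n → ℝ => ∑ i, w i ^ 2) (_root_.stdGaussian n) ∧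
    ∫ w, ∑ i, w i ^ 2 ∂(_root_.stdGaussian n) = n := by
  constructor
  · exact integrable_finsetSum _ fun i _ => (coord i 2).1
  · rw [integral_finsetSum _ fun i _ => (coord i 2).1]
    simp [(coord _ 2).2, g_two]

lemma badmass {n : ℕ} (Sig U : Matrix (Fin n) (Fin n) ℝ) (lam : Fin n → ℝ)
    (hP : Sig.PosSemidef) (ht : Sig.trace = n) (hU : U * Uᵀ = 1)
    (hS : Sig = U * Matrix.diagonal lam * Uᵀ) (E : Set (Fin n → ℝ)) (hE : MeasurableSet E)
    (K : ℝ) (hK : 0 < K) :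
    ∃ g : (Fin n → ℝ) → ℝ, Integrable g (_root_.stdGaussian n) ∧ (∀ w, 0 ≤ g w) ∧
      (∀ w ∈ E, dSig Sig w 0 ≤ g w) ∧
      ∫ w, g w ∂(_root_.stdGaussian n) ≤ n * (K * (_root_.stdGaussian n).real E
        + (∫ x, x ^ 4 ∂(gaussianReal 0 1)) / K) := by
  obtain ⟨hlam, hsum⟩ := eig_facts Sig U lam hP ht hU hS
  have hrot := rot U hU
  have hI : ∀ i, Integrable (fun w => (Uᵀ *ᵥ w) i ^ 4) (_root_.stdGaussian n) := fun i =>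
    hrot.integrable_comp_of_integrable (coord i 4).1
  have hv : ∀ i, ∫ w, (Uᵀ *ᵥ w) i ^ 4 ∂(_root_.stdGaussian n)
      = ∫ x, x ^ 4 ∂(gaussianReal 0 1) := by
    intro i
    rw [← (coord i 4).2]
    have := integral_map (μ := _root_.stdGaussian n) (φ := fun w => Uᵀ *ᵥ w)
      hrot.measurable.aemeasurable (f := fun w : Fin n → ℝ => w i ^ 4)
      ((measurable_pi_apply i).pow_const 4).aestronglyMeasurable
    rw [hrot.map_eq] at this
    exact this.symm
  have hi1 : Integrable (E.indicator (1 : (Fin n → ℝ) → ℝ)) (_root_.stdGaussian n) :=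
    (integrable_const (1 : ℝ)).indicator hE
  have hterm : ∀ i, Integrable (fun w => lam i * (K * E.indicator 1 w + (Uᵀ *ᵥ w) i ^ 4 / K))
      (_root_.stdGaussian n) := fun i =>
    ((hi1.const_mul K).add ((hI i).div_const K)).const_mul (lam i)
  refine ⟨fun w => ∑ i, lam i * (K * E.indicator 1 w + (Uᵀ *ᵥ w) i ^ 4 / K), ?_, ?_, ?_, ?_⟩
  · exact integrable_finsetSum _ fun i _ => hterm i
  · intro w
    refine Finset.sum_nonneg fun i _ => mul_nonneg (hlam i) ?_
    have : (0 : ℝ) ≤ E.indicator 1 w := Set.indicator_nonneg (fun _ _ => zero_le_one) _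
    positivity
  · intro w hw
    rw [hS, dSig_eig]
    refine Finset.sum_le_sum fun i _ => mul_le_mul_of_nonneg_left ?_ (hlam i)
    rw [Set.indicator_of_mem hw]
    simp only [Matrix.mulVec_zero, Pi.zero_apply, sub_zero, Pi.one_apply, mul_one]
    set y := (Uᵀ *ᵥ w) i
    rw [← sub_le_iff_le_add', le_div_iff₀ hK]
    nlinarith [sq_nonneg (y ^ 2 - K), sq_nonneg (y ^ 2)]
  · rw [integral_finsetSum _ fun i _ => hterm i]
    have h1 : ∀ i, ∫ w, lam i * (K * E.indicator 1 w + (Uᵀ *ᵥ w) i ^ 4 / K) ∂(_root_.stdGaussian n)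
        = lam i * (K * (_root_.stdGaussian n).real E
        + (∫ x, x ^ 4 ∂(gaussianReal 0 1)) / K) := by
      intro i
      rw [integral_const_mul, integral_add (hi1.const_mul K) ((hI i).div_const K),
        integral_const_mul, integral_div, hv, integral_indicator_one hE]
    simp_rw [h1]
    rw [← Finset.sum_mul, hsum]


lemma entry_le {n : ℕ} (Sig U : Matrix (Fin n) (Fin n) ℝ) (lam : Fin n → ℝ)
    (hP : Sig.PosSemidef) (ht : Sig.trace = n) (hU : U * Uᵀ = 1)
    (hS : Sig = U * Matrix.diagonal lam * Uᵀ) (i j : Fin n) : |Sig i j| ≤ n := by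
  obtain ⟨hlam, hsum⟩ := eig_facts Sig U lam hP ht hU hS
  have hu : ∀ i k, |U i k| ≤ 1 := by
    intro i k
    have h1 : ∑ k, U i k ^ 2 = 1 := by
      have := congrFun (congrFun hU i) i
      rw [Matrix.mul_apply, Matrix.one_apply_eq] at this
      rw [← this]
      refine Finset.sum_congr rfl fun k _ => ?_
      rw [Matrix.transpose_apply, sq]
    have h2 : U i k ^ 2 ≤ 1 := by
      rw [← h1]
      exact Finset.single_le_sum (f := fun k => U i k ^ 2) (fun k _ => sq_nonneg _)
        (Finset.mem_univ k)
    exact (sq_le_one_iff_abs_le_one _).1 h2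
  have e : Sig i j = ∑ k, U i k * lam k * U j k := by
    rw [hS, Matrix.mul_apply]
    refine Finset.sum_congr rfl fun k _ => ?_
    rw [Matrix.mul_diagonal, Matrix.transpose_apply]
  rw [e, ← hsum]
  refine (Finset.abs_sum_le_sum_abs _ _).trans (Finset.sum_le_sum fun k _ => ?_)
  rw [abs_mul, abs_mul, abs_of_nonneg (hlam k)]
  calc |U i k| * lam k * |U j k| ≤ 1 * lam k * 1 := by
        have := hlam k
        have h1 := hu i k
        have h2 := hu j k
        gcongr
    _ = lam k := by ring

lemma dist_le {n : ℕ} (S S' : Matrix (Fin n) (Fin n) ℝ) (d : ℝ)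
    (h : ∀ i j, |S' i j - S i j| ≤ d) (w v : Fin n → ℝ) :
    |dSig S' w v - dSig S w v| ≤ d * n * ∑ i, (w i - v i) ^ 2 := by
  set y : Fin n → ℝ := w - v with hy
  have e : ∀ A : Matrix (Fin n) (Fin n) ℝ, dSig A w v = ∑ i, ∑ j, y i * A i j * y j := by
    intro A
    unfold dSig
    simp only [← hy, dotProduct, Matrix.mulVec, Finset.mul_sum, mul_assoc]
  rw [e, e, ← Finset.sum_sub_distrib]
  simp_rw [← Finset.sum_sub_distrib]
  have h1 : ∑ i : Fin n, ∑ j : Fin n, d * ((y i ^ 2 + y j ^ 2) / 2) = d * n * ∑ i, y i ^ 2 := by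
    simp_rw [← Finset.mul_sum, ← Finset.sum_div, Finset.sum_add_distrib]
    simp
    rw [← Finset.mul_sum]
    ring
  have h2 : ∑ i, (w i - v i) ^ 2 = ∑ i, y i ^ 2 := rfl
  rw [h2, ← h1]
  refine (Finset.abs_sum_le_sum_abs _ _).trans (Finset.sum_le_sum fun i _ => ?_)
  refine (Finset.abs_sum_le_sum_abs _ _).trans (Finset.sum_le_sum fun j _ => ?_)
  have e2 : y i * S' i j * y j - y i * S i j * y j = (S' i j - S i j) * (y i * y j) := by ring
  rw [e2, abs_mul]
  have hd : 0 ≤ d := (abs_nonneg _).trans (h i j)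
  refine mul_le_mul (h i j) ?_ (abs_nonneg _) hd
  rw [abs_le]
  constructor <;> nlinarith [sq_nonneg (y i + y j), sq_nonneg (y i - y j)]

lemma DDrc_nonneg {n : ℕ} (hn : 0 < n) (lam : Fin n → ℝ) (hlam : ∀ i, 0 ≤ lam i)
    (hsum : ∑ i, lam i = n) (R : ℝ) (hR : 0 < R) : 0 ≤ DDrc lam R := by
  have h := (exT hn lam hlam hsum R hR).1
  unfold DDrc Drc
  refine mul_nonneg (by positivity) (Finset.sum_nonneg fun i _ => div_nonneg (hlam i) ?_)
  have := mul_nonneg (hlam i) h.le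
  linarith

/-- Admissible triples. -/
def Adm {n : ℕ} (t : Matrix (Fin n) (Fin n) ℝ × Matrix (Fin n) (Fin n) ℝ × (Fin n → ℝ)) : Prop :=
  t.1.PosSemidef ∧ t.1.trace = n ∧ t.2.1 * t.2.1ᵀ = 1 ∧
    t.1 = t.2.1 * Matrix.diagonal t.2.2 * t.2.1ᵀ

lemma cellfam {n : ℕ} (hn : 0 < n) (R η δ γ : ℝ) (hR : 0 < R) (hη : 0 < η)
    (hδ : 0 < δ) (hδ1 : δ ≤ 1) (hγ : 0 < γ) (hγ1 : γ ≤ 1)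
    (hbig : exp (-(γ ^ 2 / 128 * n)) ≤ 1 / 4) (d : ℝ) (hd : 0 < d) (m : ℕ) (hm : n / d ≤ m) :
    ∃ (S' : (Fin n → Fin n → Finset.Icc (-(m : ℤ)) m) → Matrix (Fin n) (Fin n) ℝ)
      (k : (Fin n → Fin n → Finset.Icc (-(m : ℤ)) m) → Fin ⌈1 / δ⌉₊)
      (b : (Fin n → Fin n → Finset.Icc (-(m : ℤ)) m) → ℝ)
      (Typ : (Fin n → Fin n → Finset.Icc (-(m : ℤ)) m) → Set (Fin n → ℝ)),
      (∀ c, MeasurableSet (Typ c)) ∧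
      (∀ c, ∀ w ∈ Typ c, 1 / 2 * exp (-(n * (R * log 2 + γ / δ))) ≤
        (_root_.stdGaussian n).real {x | dSig (S' c) w (√(((k c : ℕ) + 1) * δ) • x) ≤ b c}) ∧
      ∀ t, Adm t → ∃ c, (_root_.stdGaussian n).real (Typ c)ᶜ ≤ 2 * exp (-(γ ^ 2 / 16 * n)) ∧
        b c ≤ n * (DDrc t.2.2 R + 2 * η + (δ + 2 * γ) / min (2 * R * log 2) (1 / η)) ∧
        ∀ i j, |S' c i j - t.1 i j| ≤ d := by
  have hn' : (0 : ℝ) < n := by exact_mod_cast hn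
  have hK : 0 < ⌈1 / δ⌉₊ := Nat.ceil_pos.2 (by positivity)
  have key : ∀ c : Fin n → Fin n → Finset.Icc (-(m : ℤ)) m,
      ∃ (S' : Matrix (Fin n) (Fin n) ℝ) (k : Fin ⌈1 / δ⌉₊) (b : ℝ) (Typ : Set (Fin n → ℝ)),
        MeasurableSet Typ ∧
        (∀ w ∈ Typ, 1 / 2 * exp (-(n * (R * log 2 + γ / δ))) ≤
          (_root_.stdGaussian n).real {x | dSig S' w (√(((k : ℕ) + 1) * δ) • x) ≤ b}) ∧
        ∀ t, Adm t → (∀ i j, ((c i j : ℤ)) = ⌊t.1 i j / d⌋) →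
          (_root_.stdGaussian n).real Typᶜ ≤ 2 * exp (-(γ ^ 2 / 16 * n)) ∧
          b ≤ n * (DDrc t.2.2 R + 2 * η + (δ + 2 * γ) / min (2 * R * log 2) (1 / η)) ∧
          ∀ i j, |S' i j - t.1 i j| ≤ d := by
    intro c
    by_cases hne : ∃ t : Matrix (Fin n) (Fin n) ℝ × Matrix (Fin n) (Fin n) ℝ × (Fin n → ℝ),
        Adm t ∧ ∀ i j, ((c i j : ℤ)) = ⌊t.1 i j / d⌋
    · set A : Set ℝ := (fun t : Matrix (Fin n) (Fin n) ℝ × Matrix (Fin n) (Fin n) ℝ × (Fin n → ℝ)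
        => DDrc t.2.2 R) '' {t | Adm t ∧ ∀ i j, ((c i j : ℤ)) = ⌊t.1 i j / d⌋} with hA
      have hAne : A.Nonempty := by
        obtain ⟨t, ht⟩ := hne
        exact ⟨_, t, ht, rfl⟩
      have hAb : BddBelow A := by
        refine ⟨0, ?_⟩
        rintro _ ⟨t, ⟨⟨h1, h2, h3, h4⟩, -⟩, rfl⟩
        obtain ⟨hl, hs⟩ := eig_facts _ _ _ h1 h2 h3 h4
        exact DDrc_nonneg hn _ hl hs R hR
      obtain ⟨_, ⟨t, ⟨⟨h1, h2, h3, h4⟩, hc⟩, rfl⟩, hlt⟩ :=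
        exists_lt_of_csInf_lt hAne (lt_add_of_pos_right (sInf A) hη)
      obtain ⟨k, Typ, g1, g2, g3⟩ := perSig hn t.1 t.2.1 t.2.2 h1 h2 h3 h4 R η δ γ hR hη hδ hδ1
        hγ hγ1 hbig
      refine ⟨t.1, k, _, Typ, g1, g3, ?_⟩
      intro t' ht' hc'
      refine ⟨g2, ?_, ?_⟩
      · have h5 : sInf A ≤ DDrc t'.2.2 R := csInf_le hAb ⟨t', ⟨ht', hc'⟩, rfl⟩
        have h6 : DDrc t.2.2 R < sInf A + η := hlt
        apply mul_le_mul_of_nonneg_left _ hn'.le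
        linarith
      · intro i j
        have h5 : ⌊t.1 i j / d⌋ = ⌊t'.1 i j / d⌋ := by rw [← hc, ← hc']
        have h6 := (Int.abs_sub_lt_one_of_floor_eq_floor h5).le
        rw [← sub_div, abs_div, abs_of_pos hd, div_le_one hd] at h6
        exact h6
    · refine ⟨0, ⟨0, hK⟩, 0, ∅, MeasurableSet.empty, by simp, ?_⟩
      intro t ht hc
      exact absurd ⟨t, ht, hc⟩ hne
  choose S' k b Typ h1 h2 h3 using key
  refine ⟨S', k, b, Typ, h1, h2, ?_⟩
  intro t ht
  have hb : ∀ i j, ⌊t.1 i j / d⌋ ∈ Finset.Icc (-(m : ℤ)) m := by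
    intro i j
    have h4 := entry_le _ _ _ ht.1 ht.2.1 ht.2.2.1 ht.2.2.2 i j
    have h5 : |t.1 i j / d| ≤ m := by
      rw [abs_div, abs_of_pos hd]
      refine le_trans ?_ hm
      gcongr
    rw [abs_le] at h5
    rw [Finset.mem_Icc]
    constructor
    · rw [Int.le_floor]; push_cast; exact h5.1
    · have : (⌊t.1 i j / d⌋ : ℝ) ≤ m := (Int.floor_le _).trans h5.2
      exact_mod_cast this
  exact ⟨fun i j => ⟨_, hb i j⟩, h3 _ t ht fun i j => rfl⟩

lemma sq_split (a b : ℝ) : (a - b) ^ 2 ≤ 2 * (a ^ 2 + b ^ 2) := by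
  nlinarith [sq_nonneg (a + b)]

lemma assemble {n : ℕ} (hn : 0 < n) (R η δ γ : ℝ) (hR : 0 < R) (hη : 0 < η)
    (hδ : 0 < δ) (hδ1 : δ ≤ 1) (hγ : 0 < γ) (hγ1 : γ ≤ 1)
    (hbig : exp (-(γ ^ 2 / 128 * n)) ≤ 1 / 4) (d : ℝ) (hd : 0 < d) (m : ℕ) (hm : n / d ≤ m)
    (p0 : ℝ) (hp0 : 0 < p0) (hp1 : 2 * exp (-(γ ^ 2 / 16 * n)) ≤ p0) (K4 : ℝ) (hK4 : 0 < K4)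
    (M : ℕ) (B : ℝ) (hB : 0 < B)
    (hs : ((2 * m + 1) ^ (n * n) : ℕ) *
      exp (-(1 / 2 * exp (-(n * (R * log 2 + γ / δ))) * M)) / p0 + M * n / B < 1) :
    ∃ (C : Finset (Fin n → ℝ)) (f : (Fin n → ℝ) → Matrix (Fin n) (Fin n) ℝ → (Fin n → ℝ)),
      C.Nonempty ∧ C.card ≤ ⌈1 / δ⌉₊ * M + 1 ∧ (∀ w Sig, f w Sig ∈ C) ∧
      ∀ t : Matrix (Fin n) (Fin n) ℝ × Matrix (Fin n) (Fin n) ℝ × (Fin n → ℝ), Adm t →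
        ∫ w, dSig t.1 w (f w t.1) ∂(_root_.stdGaussian n) ≤
          n * (DDrc t.2.2 R + 2 * η + (δ + 2 * γ) / min (2 * R * log 2) (1 / η))
          + 2 * d * n * (n + 2 * B)
          + n * (K4 * (2 * p0) + (∫ x, x ^ 4 ∂(gaussianReal 0 1)) / K4) := by
  classical
  have hn' : (0 : ℝ) < n := by exact_mod_cast hn
  obtain ⟨S', k, b, Typ, hTm, hgood, hfam⟩ :=
    cellfam hn R η δ γ hR hη hδ hδ1 hγ hγ1 hbig d hd m hm
  set p : ℝ := 1 / 2 * exp (-(n * (R * log 2 + γ / δ))) with hp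
  have hp' : 0 ≤ p := by positivity
  set q : Fin ⌈1 / δ⌉₊ → ℝ := fun k => ((k : ℕ) + 1) * δ with hq
  have hq0 : ∀ k, 0 ≤ q k := fun k => by simp only [hq]; positivity
  have hq2 : ∀ k, q k ≤ 2 := by
    intro k
    have h1 : ((k : ℕ) : ℝ) + 1 ≤ ⌈1 / δ⌉₊ := by exact_mod_cast k.2
    have h2 := (Nat.ceil_lt_add_one (a := 1 / δ) (by positivity)).le
    calc q k ≤ (1 / δ + 1) * δ := mul_le_mul_of_nonneg_right (h1.trans h2) hδ.le
      _ = 1 + δ := by field_simp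
      _ ≤ 2 := by linarith
  have hcont : ∀ (S : Matrix (Fin n) (Fin n) ℝ) (s : ℝ),
      Continuous fun z : (Fin n → ℝ) × (Fin n → ℝ) => dSig S z.1 (s • z.2) := by
    intro S s
    unfold dSig
    have h : Continuous fun z : (Fin n → ℝ) × (Fin n → ℝ) => z.1 - s • z.2 := by fun_prop
    exact h.dotProduct (continuous_const.matrix_mulVec h)
  have hGm : ∀ c, MeasurableSet {z : (Fin n → ℝ) × (Fin n → ℝ) |
      dSig (S' c) z.1 (√(q (k c)) • z.2) ≤ b c} := fun c =>
    measurableSet_le (hcont _ _).measurable measurable_const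
  have hlint : ∫⁻ x : Fin n → ℝ, ENNReal.ofReal (∑ i, x i ^ 2) ∂(_root_.stdGaussian n)
      = ENNReal.ofReal n := by
    rw [← ofReal_integral_eq_lintegral_ofReal sumsq.1
      (Filter.Eventually.of_forall fun w => Finset.sum_nonneg fun i _ => sq_nonneg _), sumsq.2]
  obtain ⟨x, hx1, hx2⟩ := codebook (_root_.stdGaussian n) M
    (fun c => {z : (Fin n → ℝ) × (Fin n → ℝ) | dSig (S' c) z.1 (√(q (k c)) • z.2) ≤ b c}) hGm
    Typ hTm p hp' hgood (fun x => ENNReal.ofReal (∑ i, x i ^ 2)) (by fun_prop)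
    (ENNReal.ofReal p0) (ENNReal.ofReal B) (by simpa using hp0) ENNReal.ofReal_ne_top
    (by simpa using hB) ENNReal.ofReal_ne_top (by
      rw [hlint, ← ENNReal.ofReal_inv_of_pos hp0, ← ENNReal.ofReal_inv_of_pos hB]
      have hcard : Fintype.card (Fin n → Fin n → Finset.Icc (-(m : ℤ)) m)
          = (2 * m + 1) ^ (n * n) := by
        simp only [Fintype.card_pi, Finset.prod_const, Finset.card_univ, Fintype.card_fin,
          Fintype.card_coe, Int.card_Icc]
        rw [← pow_mul]
        congr 1
        omega
      rw [hcard, ← ENNReal.ofReal_natCast, ← ENNReal.ofReal_natCast M,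
        ← ENNReal.ofReal_mul (by positivity), ← ENNReal.ofReal_mul (by positivity),
        ← ENNReal.ofReal_mul (by positivity), ← ENNReal.ofReal_mul (by positivity),
        ← ENNReal.ofReal_add (by positivity) (by positivity), ← ENNReal.ofReal_one]
      rw [ENNReal.ofReal_lt_ofReal_iff one_pos]
      simpa only [div_eq_mul_inv] using hs)
  have hx3 : ∀ j, ∑ i, x j i ^ 2 ≤ B := fun j =>
    (ENNReal.ofReal_le_ofReal_iff hB.le).1 (hx2 j)
  set F : Fin ⌈1 / δ⌉₊ × Fin M → (Fin n → ℝ) := fun a => √(q a.1) • x a.2 with hF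
  set C : Finset (Fin n → ℝ) := insert 0 (Finset.univ.image F) with hC
  have hCne : C.Nonempty := ⟨0, Finset.mem_insert_self _ _⟩
  have hmin : ∀ (w : Fin n → ℝ) (S : Matrix (Fin n) (Fin n) ℝ),
      ∃ v ∈ C, ∀ v' ∈ C, dSig S w v ≤ dSig S w v' := fun w S =>
    Finset.exists_min_image C (fun v => dSig S w v) hCne
  choose f hf1 hf2 using hmin
  refine ⟨C, f, hCne, ?_, hf1, ?_⟩
  · refine (Finset.card_insert_le _ _).trans ?_
    have := Finset.card_image_le (s := (Finset.univ : Finset (Fin ⌈1 / δ⌉₊ × Fin M))) (f := F)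
    simp only [Finset.card_univ, Fintype.card_prod, Fintype.card_fin] at this
    omega
  · intro t ht
    obtain ⟨c, hc1, hc2, hc3⟩ := hfam t ht
    set Bad : Set (Fin n → ℝ) := {w | w ∈ Typ c ∧ ∀ j, ¬ (dSig (S' c) w (√(q (k c)) • x j) ≤ b c)}
      with hBad
    have hBadm : MeasurableSet Bad := by
      have e : Bad = Typ c ∩ ⋂ j, {w | dSig (S' c) w (√(q (k c)) • x j) ≤ b c}ᶜ := by
        ext w; simp [hBad]
      rw [e]
      refine (hTm c).inter (MeasurableSet.iInter fun j => MeasurableSet.compl ?_)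
      refine measurableSet_le ?_ measurable_const
      exact ((hcont (S' c) (√(q (k c)))).comp
        (continuous_id.prodMk (continuous_const (y := x j)))).measurable
    have hBadp : (_root_.stdGaussian n).real Bad ≤ p0 := by
      rw [measureReal_def]
      exact ENNReal.toReal_le_of_le_ofReal hp0.le (hx1 c)
    set E := (Typ c)ᶜ ∪ Bad with hE
    have hEp : (_root_.stdGaussian n).real E ≤ 2 * p0 :=
      (measureReal_union_le _ _).trans (by linarith)
    obtain ⟨g, hg1, hg2, hg3, hg4⟩ := badmass t.1 t.2.1 t.2.2 ht.1 ht.2.1 ht.2.2.1 ht.2.2.2 E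
      ((hTm c).compl.union hBadm) K4 hK4
    set b0 := n * (DDrc t.2.2 R + 2 * η + (δ + 2 * γ) / min (2 * R * log 2) (1 / η)) with hb0
    have hb00 : 0 ≤ b0 := by
      obtain ⟨hl, hsu⟩ := eig_facts _ _ _ ht.1 ht.2.1 ht.2.2.1 ht.2.2.2
      have h1 := DDrc_nonneg hn _ hl hsu R hR
      have hl2 : 0 < log 2 := log_pos (by norm_num)
      have h2 : 0 < min (2 * R * log 2) (1 / η) := lt_min (by positivity) (by positivity)
      positivity
    have hpt : ∀ w, dSig t.1 w (f w t.1) ≤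
        b0 + 2 * d * n * (∑ i, w i ^ 2 + 2 * B) + g w := by
      intro w
      have hw0 : 0 ≤ ∑ i, w i ^ 2 := Finset.sum_nonneg fun i _ => sq_nonneg _
      have hpos : 0 ≤ 2 * d * n * (∑ i, w i ^ 2 + 2 * B) := by positivity
      by_cases hw : w ∈ E
      · have h1 := (hf2 w t.1 0 (Finset.mem_insert_self _ _)).trans (hg3 w hw)
        linarith
      · have hwT : w ∈ Typ c := by
          by_contra h; exact hw (Or.inl h)
        obtain ⟨j, hj⟩ : ∃ j, dSig (S' c) w (√(q (k c)) • x j) ≤ b c := by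
          by_contra h
          push Not at h
          exact hw (Or.inr ⟨hwT, fun j => not_le.2 (h j)⟩)
        have hmem : √(q (k c)) • x j ∈ C :=
          Finset.mem_insert_of_mem (Finset.mem_image.2 ⟨(k c, j), Finset.mem_univ _, rfl⟩)
        have h1 := hf2 w t.1 _ hmem
        have h2 := (abs_le.1 (dist_le t.1 (S' c) d hc3 w (√(q (k c)) • x j))).1
        have h3 : ∑ i, (w i - (√(q (k c)) • x j) i) ^ 2 ≤ 2 * (∑ i, w i ^ 2 + 2 * B) := by
          calc _ ≤ ∑ i, 2 * (w i ^ 2 + q (k c) * x j i ^ 2) := by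
                refine Finset.sum_le_sum fun i _ => ?_
                have := sq_split (w i) (√(q (k c)) * x j i)
                rw [mul_pow, sq_sqrt (hq0 _)] at this
                exact this
            _ = 2 * (∑ i, w i ^ 2 + q (k c) * ∑ i, x j i ^ 2) := by
                rw [← Finset.mul_sum, Finset.sum_add_distrib, ← Finset.mul_sum]
            _ ≤ 2 * (∑ i, w i ^ 2 + 2 * B) := by
                have := mul_le_mul (hq2 (k c)) (hx3 j)
                  (Finset.sum_nonneg fun i _ => sq_nonneg _) (by norm_num)
                linarith
        have h4 := mul_le_mul_of_nonneg_left h3 (by positivity : 0 ≤ d * n)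
        have h5 := hg2 w
        linarith
    have hI1 : Integrable (fun w : Fin n → ℝ => 2 * d * n * (∑ i, w i ^ 2 + 2 * B))
        (_root_.stdGaussian n) := (sumsq.1.add (integrable_const (2 * B))).const_mul _
    have hI2 : Integrable (fun w : Fin n → ℝ => b0 + 2 * d * n * (∑ i, w i ^ 2 + 2 * B))
        (_root_.stdGaussian n) := (integrable_const b0).add hI1
    calc ∫ w, dSig t.1 w (f w t.1) ∂(_root_.stdGaussian n)
        ≤ ∫ w, b0 + 2 * d * n * (∑ i, w i ^ 2 + 2 * B) + g w ∂(_root_.stdGaussian n) := by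
          refine integral_mono_of_nonneg (Filter.Eventually.of_forall fun w => ?_) (hI2.add hg1)
            (Filter.Eventually.of_forall hpt)
          have := ht.1.dotProduct_mulVec_nonneg (w - f w t.1)
          simpa [dSig] using this
      _ = b0 + 2 * d * n * (n + 2 * B) + ∫ w, g w ∂(_root_.stdGaussian n) := by
          have e1 : ∫ w : Fin n → ℝ, 2 * d * n * (∑ i, w i ^ 2 + 2 * B) ∂(_root_.stdGaussian n)
              = 2 * d * n * (n + 2 * B) := by
            rw [integral_const_mul, integral_add sumsq.1 (integrable_const (2 * B)), sumsq.2]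
            simp
          rw [integral_add hI2 hg1, integral_add (integrable_const b0) hI1, e1]
          simp
      _ ≤ _ := by
          have : n * (K4 * (_root_.stdGaussian n).real E
              + (∫ x, x ^ 4 ∂(gaussianReal 0 1)) / K4) ≤ n * (K4 * (2 * p0)
              + (∫ x, x ^ 4 ∂(gaussianReal 0 1)) / K4) := by gcongr
          linarith

lemma ev (k : ℕ) (b c : ℝ) (hb : 0 < b) (hc : 0 < c) :
    ∀ᶠ n : ℕ in Filter.atTop, (n : ℝ) ^ k ≤ c * exp (b * n) := by
  have h := (isLittleO_pow_exp_pos_mul_atTop (k := k) hb).def hc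
  have h2 := tendsto_natCast_atTop_atTop (R := ℝ) |>.eventually h
  filter_upwards [h2] with n hn
  rw [Real.norm_of_nonneg (by positivity), Real.norm_of_nonneg (exp_pos _).le] at hn
  exact hn

lemma ev0 (b c : ℝ) (hb : 0 < b) (hc : 0 < c) :
    ∀ᶠ n : ℕ in Filter.atTop, exp (-(b * n)) ≤ c := by
  filter_upwards [ev 0 b c hb hc] with n hn
  rw [exp_neg, inv_le_iff_one_le_mul₀ (exp_pos _)]
  simpa using hn

lemma main (R ε η : ℝ) (hR : 0 < R) (hε : 0 < ε) (hη : 0 < η) :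
    ∃ n₀ : ℕ, ∀ n : ℕ, n₀ ≤ n → 0 < n ∧
      ∃ (C : Finset (Fin n → ℝ)) (f : (Fin n → ℝ) → Matrix (Fin n) (Fin n) ℝ → (Fin n → ℝ)),
        C.Nonempty ∧ Real.logb 2 (C.card : ℝ) ≤ (n : ℝ) * (R + ε) ∧ (∀ w Sig, f w Sig ∈ C) ∧
        ∀ t : Matrix (Fin n) (Fin n) ℝ × Matrix (Fin n) (Fin n) ℝ × (Fin n → ℝ), Adm t →
          ∫ w, dSig t.1 w (f w t.1) ∂(_root_.stdGaussian n) ≤ n * (DDrc t.2.2 R + η) := by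
  have hl2 : 0 < log 2 := log_pos (by norm_num)
  obtain ⟨L, hL⟩ : ∃ L, L = R * log 2 := ⟨_, rfl⟩
  have hL0 : 0 < L := by rw [hL]; positivity
  obtain ⟨ρ, hρ⟩ : ∃ ρ, ρ = ε * log 2 / 4 := ⟨_, rfl⟩
  have hρ0 : 0 < ρ := by rw [hρ]; positivity
  obtain ⟨Tm, hTm⟩ : ∃ Tm, Tm = min (2 * R * log 2) (1 / (η / 8)) := ⟨_, rfl⟩
  have hTm0 : 0 < Tm := by rw [hTm]; exact lt_min (by positivity) (by positivity)
  obtain ⟨δ, hδ0, hδ1, hδ2⟩ : ∃ δ : ℝ, 0 < δ ∧ δ ≤ 1 ∧ δ ≤ η / 16 * Tm :=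
    ⟨min 1 (η / 16 * Tm), lt_min one_pos (by positivity), min_le_left _ _, min_le_right _ _⟩
  obtain ⟨γ, hγ0, hγ1, hγ2, hγ3⟩ : ∃ γ : ℝ, 0 < γ ∧ γ ≤ 1 ∧ γ ≤ η / 32 * Tm ∧ γ ≤ ρ * δ :=
    ⟨min 1 (min (η / 32 * Tm) (ρ * δ)), lt_min one_pos (lt_min (by positivity) (by positivity)),
      min_le_left _ _, (min_le_right _ _).trans (min_le_left _ _),
      (min_le_right _ _).trans (min_le_right _ _)⟩
  obtain ⟨m4, hm4⟩ : ∃ m4, m4 = ∫ x, x ^ 4 ∂(gaussianReal 0 1) := ⟨_, rfl⟩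
  obtain ⟨K4, hK40, hK4⟩ : ∃ K4 : ℝ, 0 < K4 ∧ m4 / K4 ≤ η / 16 := by
    refine ⟨max 1 (m4 / (η / 16)), lt_max_of_lt_left one_pos, ?_⟩
    rw [div_le_iff₀ (lt_max_of_lt_left one_pos)]
    have h1 := le_max_right 1 (m4 / (η / 16))
    rw [div_le_iff₀ (by positivity)] at h1
    linarith
  obtain ⟨p0, hp0, hp0'⟩ : ∃ p0 : ℝ, 0 < p0 ∧ K4 * (2 * p0) = η / 16 :=
    ⟨η / 16 / (2 * K4), by positivity, by field_simp⟩
  obtain ⟨K, hK⟩ : ∃ K : ℕ, K = ⌈1 / δ⌉₊ := ⟨_, rfl⟩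
  set c := L + 2 * ρ + 1 with hc
  have hc0 : 0 < c := by positivity
  have hall : ∀ᶠ n : ℕ in Filter.atTop, 1 ≤ n ∧ (n : ℝ) ^ 0 ≤ (1 / (K + 1)) * exp ((2 * ρ) * n) ∧
      exp (-(γ ^ 2 / 128 * n)) ≤ 1 / 4 ∧ exp (-(γ ^ 2 / 16 * n)) ≤ p0 / 2 ∧
      (n : ℝ) ^ 2 ≤ (η / 576) * exp (1 * n) ∧ (n : ℝ) ^ 0 ≤ (1 / 6) * exp (1 * n) ∧
      (n : ℝ) ^ 3 ≤ (1 / (8 * c)) * exp (ρ * n) ∧ (n : ℝ) ^ 1 ≤ (1 / 8) * exp (ρ * n) ∧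
      exp (-(1 * (n : ℝ))) ≤ p0 / 4 := by
    filter_upwards [Filter.eventually_ge_atTop 1,
      ev 0 (2 * ρ) (1 / (K + 1)) (by positivity) (by positivity),
      ev0 (γ ^ 2 / 128) (1 / 4) (by positivity) (by positivity),
      ev0 (γ ^ 2 / 16) (p0 / 2) (by positivity) (by positivity),
      ev 2 1 (η / 576) (by positivity) (by positivity),
      ev 0 1 (1 / 6) (by positivity) (by positivity),
      ev 3 ρ (1 / (8 * c)) (by positivity) (by positivity),
      ev 1 ρ (1 / 8) (by positivity) (by positivity),
      ev0 1 (p0 / 4) (by positivity) (by positivity)] with n a1 a2 a3 a4 a5 a6 a7 a8 a9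
    exact ⟨a1, a2, a3, a4, a5, a6, a7, a8, a9⟩
  obtain ⟨n₀, hn₀⟩ := Filter.eventually_atTop.1 hall
  refine ⟨n₀, fun n hn => ?_⟩
  obtain ⟨a1, a2, a3, a4, a5, a6, a7, a8, a9⟩ := hn₀ n hn
  have hn1 : 0 < n := a1
  have hn' : (0 : ℝ) < n := by exact_mod_cast hn1
  refine ⟨hn1, ?_⟩
  simp only [one_mul, pow_zero, pow_one] at a2 a5 a6 a8 a9
  obtain ⟨E1, hE1⟩ : ∃ E1, E1 = exp (n * (L + 2 * ρ)) := ⟨_, rfl⟩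
  have hE11 : 1 ≤ E1 := by rw [hE1]; exact one_le_exp (by positivity)
  obtain ⟨M, hM⟩ : ∃ M : ℕ, M = ⌊E1⌋₊ := ⟨_, rfl⟩
  have hM1 : 1 ≤ M := by rw [hM]; exact Nat.le_floor (by simpa using hE11)
  have hM1' : (1 : ℝ) ≤ M := by exact_mod_cast hM1
  have hMle : (M : ℝ) ≤ E1 := by rw [hM]; exact Nat.floor_le (by linarith)
  have hMge : E1 / 2 ≤ M := by
    have := (Nat.lt_floor_add_one E1).le
    rw [← hM] at this
    linarith
  obtain ⟨B, hB⟩ : ∃ B : ℝ, B = 4 * M * n := ⟨_, rfl⟩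
  have hB0 : 0 < B := by rw [hB]; positivity
  obtain ⟨d, hd⟩ : ∃ d : ℝ, d = η / (16 * (n + 2 * B)) := ⟨_, rfl⟩
  have hd0 : 0 < d := by rw [hd]; positivity
  obtain ⟨m, hm⟩ : ∃ m : ℕ, m = ⌈n / d⌉₊ := ⟨_, rfl⟩
  have hmle : n / d ≤ m := by rw [hm]; exact Nat.le_ceil _
  have hmlt : (m : ℝ) ≤ n / d + 1 := by
    rw [hm]; exact (Nat.ceil_lt_add_one (by positivity)).le
  -- the size of the net
  have hnd : n / d ≤ 144 * n ^ 2 / η * M := by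
    have e : n / d = 16 * n ^ 2 / η * (1 + 8 * M) := by rw [hd, hB]; field_simp; ring
    rw [e]
    have h : 0 ≤ 16 * (n : ℝ) ^ 2 / η := by positivity
    have e2 : 144 * (n : ℝ) ^ 2 / η * M = 16 * n ^ 2 / η * (9 * M) := by ring
    rw [e2]
    exact mul_le_mul_of_nonneg_left (by linarith) h
  have hbase : (2 * (m : ℝ) + 1) ≤ exp (n * c) := by
    have e : exp (n * c) = exp n * E1 := by rw [hE1, ← exp_add, hc]; ring_nf
    have h1 : 288 * (n : ℝ) ^ 2 / η + 3 ≤ exp n := by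
      have : 288 * (n : ℝ) ^ 2 / η ≤ exp n / 2 := by
        rw [div_le_iff₀ hη]
        linarith
      linarith
    calc (2 * (m : ℝ) + 1) ≤ 2 * (144 * n ^ 2 / η * M) + 3 * M := by linarith
      _ = (288 * (n : ℝ) ^ 2 / η + 3) * M := by ring
      _ ≤ exp n * E1 := by gcongr
      _ = _ := e.symm
  have hN : (((2 * m + 1) ^ (n * n) : ℕ) : ℝ) ≤ exp (c * n ^ 3) := by
    push_cast
    calc (2 * (m : ℝ) + 1) ^ (n * n) ≤ exp (n * c) ^ (n * n) := by gcongr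
      _ = exp (c * n ^ 3) := by rw [← exp_nat_mul]; push_cast; ring_nf
  have hpM : 1 / 4 * exp (ρ * n) ≤ 1 / 2 * exp (-(n * (R * log 2 + γ / δ))) * M := by
    have h1 : γ / δ ≤ ρ := by rw [div_le_iff₀ hδ0]; exact hγ3
    have h2 : exp (-(n * (L + ρ))) ≤ exp (-(n * (R * log 2 + γ / δ))) := by
      rw [← hL]; gcongr
    calc 1 / 4 * exp (ρ * n) = 1 / 2 * exp (-(n * (L + ρ))) * (E1 / 2) := by
          have : exp (ρ * n) = exp (-(n * (L + ρ))) * E1 := by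
            rw [hE1, ← exp_add]; ring_nf
          rw [this]; ring
      _ ≤ _ := by gcongr
  have hcn : c * (n : ℝ) ^ 3 + n ≤ 1 / 4 * exp (ρ * n) := by
    have h1 : c * (n : ℝ) ^ 3 ≤ 1 / 8 * exp (ρ * n) := by
      calc c * (n : ℝ) ^ 3 ≤ c * ((1 / (8 * c)) * exp (ρ * n)) := by gcongr
        _ = _ := by field_simp
    linarith
  have hsum : ((2 * m + 1) ^ (n * n) : ℕ) *
      exp (-(1 / 2 * exp (-(n * (R * log 2 + γ / δ))) * M)) / p0 + M * n / B < 1 := by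
    have h1 : M * n / B = 1 / 4 := by rw [hB]; field_simp
    have h2 : ((2 * m + 1) ^ (n * n) : ℕ) *
        exp (-(1 / 2 * exp (-(n * (R * log 2 + γ / δ))) * M)) ≤ p0 / 4 := by
      calc _ ≤ exp (c * n ^ 3) * exp (-(1 / 2 * exp (-(n * (R * log 2 + γ / δ))) * M)) :=
            mul_le_mul_of_nonneg_right hN (exp_pos _).le
        _ ≤ exp (-(n : ℝ)) := by
            rw [← exp_add]; apply exp_le_exp.2; linarith
        _ ≤ p0 / 4 := a9
    have h3 : ((2 * m + 1) ^ (n * n) : ℕ) *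
        exp (-(1 / 2 * exp (-(n * (R * log 2 + γ / δ))) * M)) / p0 ≤ 1 / 4 := by
      rw [div_le_iff₀ hp0]; linarith
    rw [h1]; linarith
  obtain ⟨C, f, c1, c2, c3, c4⟩ := assemble hn1 R (η / 8) δ γ hR (by positivity) hδ0 hδ1 hγ0 hγ1
    a3 d hd0 m hmle p0 hp0 (by linarith) K4 hK40 M B hB0 hsum
  refine ⟨C, f, c1, ?_, c3, ?_⟩
  · have hcard : (C.card : ℝ) ≤ exp (n * (L + 4 * ρ)) := by
      rw [← hK] at c2
      have h1 : (C.card : ℝ) ≤ K * M + 1 := by exact_mod_cast c2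
      have h2 : (K : ℝ) + 1 ≤ exp (2 * ρ * n) := by
        rw [one_div, inv_mul_eq_div, le_div_iff₀ (by positivity)] at a2
        linarith
      calc (C.card : ℝ) ≤ (K + 1) * M := by linarith
        _ ≤ exp (2 * ρ * n) * E1 := by gcongr
        _ = _ := by rw [hE1, ← exp_add]; ring_nf
    have hpos : (0 : ℝ) < C.card := by exact_mod_cast c1.card_pos
    rw [logb, div_le_iff₀ hl2]
    refine (log_le_log hpos hcard).trans (le_of_eq ?_)
    rw [log_exp, hL, hρ]; ring
  · intro t ht
    refine (c4 t ht).trans ?_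
    rw [← hTm, ← hm4]
    have h1 : (δ + 2 * γ) / Tm ≤ η / 8 := by
      rw [div_le_iff₀ hTm0]; linarith
    have h2 : 2 * d * n * (n + 2 * B) = n * (η / 8) := by
      rw [hd]; field_simp; ring
    rw [h2, ← mul_add, ← mul_add]
    apply mul_le_mul_of_nonneg_left _ hn'.le
    rw [hp0']
    linarith

end UCB

/-- existence of a single universal codebook `C` with
`log₂|C| ≤ n(R* + ε)`, simultaneously near-optimal for all PSD `Σ` of trace `n`. -/
theorem stmt_3 (Rstar ε η : ℝ) (hRstar : 0 < Rstar) (hε : 0 < ε) (hη : 0 < η) :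
    ∃ n₀ : ℕ, ∀ n : ℕ, n₀ ≤ n →
      ∃ (C : Finset (Fin n → ℝ))
        (f : (Fin n → ℝ) → Matrix (Fin n) (Fin n) ℝ → (Fin n → ℝ)),
        C.Nonempty ∧
        Real.logb 2 (C.card : ℝ) ≤ (n : ℝ) * (Rstar + ε) ∧
        (∀ w Sig, f w Sig ∈ C) ∧
        (∀ (Sig : Matrix (Fin n) (Fin n) ℝ), Sig.PosSemidef → Sig.trace = (n : ℝ) →
         ∀ (U : Matrix (Fin n) (Fin n) ℝ), U * Uᵀ = 1 →
         ∀ lam : Fin n → ℝ, Sig = U * Matrix.diagonal lam * Uᵀ →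
           (1 / (n : ℝ)) * ∫ w, dSig Sig w (f w Sig) ∂(stdGaussian n)
             ≤ DDrc lam Rstar + η * Sig.trace / (n : ℝ)) := by
  obtain ⟨n₀, h⟩ := UCB.main Rstar ε η hRstar hε hη
  refine ⟨n₀, fun n hn => ?_⟩
  obtain ⟨hn1, C, f, c1, c2, c3, c4⟩ := h n hn
  refine ⟨C, f, c1, c2, c3, ?_⟩
  intro Sig hP ht U hU lam hS
  have hn' : (0 : ℝ) < n := by exact_mod_cast hn1
  have h5 := c4 (Sig, U, lam) ⟨hP, ht, hU, hS⟩
  rw [ht, mul_div_assoc, div_self hn'.ne', mul_one, one_div, inv_mul_le_iff₀ hn']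
  exact h5
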